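/- arXiv:2111.07289 — 14 statements merged into one kernel-verified Lean document; each statement's English description precedes it below -/
import Mathlib

section
/- Let G be a bipartite graph with fixed parts A and B. Then the following three statements are equivalent: (1) either G is nonempty, or G is empty but both A and B are infinite sets; (2) G is proximinal for a metric space; (3) G is proximinal for a semimetric space. -/
open Set

/-- A semimetric on a set `X`: a symmetric, nonnegative distance function
vanishing exactly on the diagonal. -/
structure IsSemimetric {X : Type*} (d : X → X → ℝ) : Prop where
  nonneg : ∀ x y, 0 ≤ d x y
  symm : ∀ x y, d x y = d y x
  eq_zero_iff : ∀ x y, d x y = 0 ↔ x = y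

/-- A metric: a semimetric satisfying the triangle inequality. -/
def IsMetric {X : Type*} (d : X → X → ℝ) : Prop :=
  IsSemimetric d ∧ ∀ x y z, d x y ≤ d x z + d z y

/-- An ultrametric: a semimetric satisfying the strong triangle inequality
(which implies the triangle inequality). -/
def IsUltrametric {X : Type*} (d : X → X → ℝ) : Prop :=
  IsSemimetric d ∧ ∀ x y z, d x y ≤ max (d x z) (d z y)

/-- `dist(A,B) = inf {d a b : a ∈ A, b ∈ B}`. -/
noncomputable def SetDist {X : Type*} (d : X → X → ℝ) (A B : Set X) : ℝ :=
  sInf (Set.image2 d A B)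

/-- `A` is proximinal in `(X,d)`: every point of `X` has a best approximation in `A`. -/
def Proximinal {X : Type*} (d : X → X → ℝ) (A : Set X) : Prop :=
  ∀ x : X, ∃ a ∈ A, d x a = sInf ((d x) '' A)

/-- `G` is the proximinal graph `G_{X,d}(A,B)`: a bipartite graph with (nonempty,
disjoint, proximinal) parts `A` and `B`, whose vertex set is `A ∪ B` (all other
points of the ambient type are isolated and are not vertices of the graph), and in
which `a ∈ A` and `b ∈ B` are adjacent iff `d a b = dist(A,B)`. -/
structure ProximinalFor {X : Type*} (d : X → X → ℝ) (G : SimpleGraph X) (A B : Set X) : Prop where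
  nonemptyA : A.Nonempty
  nonemptyB : B.Nonempty
  disj : Disjoint A B
  proxA : Proximinal d A
  proxB : Proximinal d B
  edges_between : ∀ u v, G.Adj u v → (u ∈ A ∧ v ∈ B) ∨ (u ∈ B ∧ v ∈ A)
  adj_iff : ∀ a ∈ A, ∀ b ∈ B, (G.Adj a b ↔ d a b = SetDist d A B)

/-- `G` is a farthest graph for `(X,d)` with parts `A`, `B`: `a ∈ A` and `b ∈ B`
are adjacent iff `d a b = sup {d x y : x ∈ A, y ∈ B}`, i.e. iff `d a b` is an upper
bound of all the cross distances. -/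
structure FarthestFor {X : Type*} (d : X → X → ℝ) (G : SimpleGraph X) (A B : Set X) : Prop where
  nonemptyA : A.Nonempty
  nonemptyB : B.Nonempty
  disj : Disjoint A B
  edges_between : ∀ u v, G.Adj u v → (u ∈ A ∧ v ∈ B) ∨ (u ∈ B ∧ v ∈ A)
  adj_iff : ∀ a ∈ A, ∀ b ∈ B, (G.Adj a b ↔ ∀ x ∈ A, ∀ y ∈ B, d x y ≤ d a b)

theorem aux_metric {V : Type*} (d : V → V → ℝ) (h0 : ∀ x, d x x = 0)
    (hs : ∀ x y, d x y = d y x) (h1 : ∀ x y, x ≠ y → 1 ≤ d x y ∧ d x y ≤ 2) : IsMetric d := by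
  have hn : ∀ x y, 0 ≤ d x y := by
    intro x y
    by_cases h : x = y
    · subst h; exact (h0 x).ge
    · linarith [(h1 x y h).1]
  refine ⟨⟨hn, hs, ?_⟩, ?_⟩
  · intro x y
    constructor
    · intro h
      by_contra hne
      linarith [(h1 x y hne).1]
    · rintro rfl; exact h0 x
  · intro x y z
    by_cases hxy : x = y
    · subst hxy; rw [h0]; linarith [hn x z, hn z x]
    by_cases hxz : x = z
    · subst hxz; rw [h0]; linarith
    by_cases hzy : z = y
    · subst hzy; rw [h0]; linarith
    linarith [(h1 x y hxy).2, (h1 x z hxz).1, (h1 z y hzy).1]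

theorem aux_prox {V : Type*} (d : V → V → ℝ) (A : Set V)
    (h : ∀ x, ∃ a ∈ A, ∀ a' ∈ A, d x a ≤ d x a') : Proximinal d A := by
  intro x
  obtain ⟨a, ha, hm⟩ := h x
  refine ⟨a, ha, ?_⟩
  have : IsLeast ((d x) '' A) (d x a) := by
    refine ⟨⟨a, ha, rfl⟩, ?_⟩
    rintro _ ⟨a', ha', rfl⟩
    exact hm a' ha'
  exact this.csInf_eq.symm

theorem aux_prox_le {V : Type*} (d : V → V → ℝ) (hd : IsSemimetric d) (A : Set V)
    (h : Proximinal d A) : ∀ x, ∃ a ∈ A, ∀ a' ∈ A, d x a ≤ d x a' := by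
  intro x
  obtain ⟨a, ha, he⟩ := h x
  refine ⟨a, ha, fun a' ha' => ?_⟩
  rw [he]
  refine csInf_le ⟨0, ?_⟩ ⟨a', ha', rfl⟩
  rintro _ ⟨z, _, rfl⟩
  exact hd.nonneg _ _

theorem aux_setDist {V : Type*} (d : V → V → ℝ) (A B : Set V) (a b : V) (ha : a ∈ A) (hb : b ∈ B)
    (h : ∀ a' ∈ A, ∀ b' ∈ B, d a b ≤ d a' b') : SetDist d A B = d a b := by
  have : IsLeast (Set.image2 d A B) (d a b) := by
    refine ⟨⟨a, ha, b, hb, rfl⟩, ?_⟩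
    rintro _ ⟨a', ha', b', hb', rfl⟩
    exact h a' ha' b' hb'
  exact this.csInf_eq

theorem aux_min {V : Type*} (d : V → V → ℝ) (hd : IsSemimetric d) (A B : Set V)
    (hA : A.Nonempty) (hf : A.Finite) (h : Proximinal d B) :
    ∃ a ∈ A, ∃ b ∈ B, ∀ a' ∈ A, ∀ b' ∈ B, d a b ≤ d a' b' := by
  choose p hp hm using aux_prox_le d hd B h
  obtain ⟨a, ha, hmin⟩ := Set.exists_min_image A (fun a => d a (p a)) hf hA
  exact ⟨a, ha, p a, hp a, fun a' ha' b' hb' => (hmin a' ha').trans (hm a' b' hb')⟩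

theorem aux_rank {V : Type*} (A : Set V) (hA : A.Infinite) :
    ∃ r : V → ℕ, ∀ n, ∃ a ∈ A, r a = n := by
  let e := hA.natEmbedding
  have hi : Function.Injective (fun n => (e n : V)) :=
    Subtype.val_injective.comp e.injective
  exact ⟨Function.invFun (fun n => (e n : V)), fun n =>
    ⟨e n, (e n).2, Function.leftInverse_invFun hi n⟩⟩

open Classical in
theorem aux_one {V : Type*} (G : SimpleGraph V) (A B : Set V)
    (hA : A.Nonempty) (hB : B.Nonempty) (hAB : Disjoint A B)
    (hbip : ∀ u v, G.Adj u v → (u ∈ A ∧ v ∈ B) ∨ (u ∈ B ∧ v ∈ A))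
    (u v : V) (hu : u ∈ A) (hv : v ∈ B) (huv : G.Adj u v) :
    ∃ d : V → V → ℝ, IsMetric d ∧ ProximinalFor d G A B := by
  let d : V → V → ℝ := fun x y => if x = y then 0 else if G.Adj x y then 1 else 2
  have dval : ∀ x y, d x y = if x = y then 0 else if G.Adj x y then 1 else 2 := fun _ _ => rfl
  have h1 : ∀ x y, x ≠ y → 1 ≤ d x y ∧ d x y ≤ 2 := by
    intro x y h
    rw [dval, if_neg h]
    split_ifs <;> norm_num
  have hm : IsMetric d := by
    refine aux_metric d (fun x => by simp [dval]) (fun x y => ?_) h1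
    simp only [dval, eq_comm (a := x), G.adj_comm x]
  have hp : ∀ C : Set V, C.Nonempty → Proximinal d C := by
    intro C hC
    refine aux_prox d C fun x => ?_
    by_cases hx : x ∈ C
    · refine ⟨x, hx, fun a' _ => ?_⟩
      have : d x x = 0 := by simp [dval]
      rw [this]; exact hm.1.nonneg _ _
    by_cases hadj : ∃ c ∈ C, G.Adj x c
    · obtain ⟨c, hc, hxc⟩ := hadj
      refine ⟨c, hc, fun a' ha' => ?_⟩
      have : d x c = 1 := by simp [dval, hxc, hxc.ne]
      rw [this]
      exact (h1 x a' (fun h => hx (h ▸ ha'))).1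
    · push Not at hadj
      obtain ⟨c, hc⟩ := hC
      refine ⟨c, hc, fun a' ha' => ?_⟩
      have : d x a' = 2 := by
        have hne : x ≠ a' := fun h => hx (h ▸ ha')
        rw [dval, if_neg hne, if_neg (hadj a' ha')]
      rw [this]
      exact (h1 x c (fun h => hx (h ▸ hc))).2
  have hne : ∀ a ∈ A, ∀ b ∈ B, a ≠ b := fun a ha b hb => hAB.ne_of_mem ha hb
  have duv : d u v = 1 := by simp [dval, huv, huv.ne]
  have hS : SetDist d A B = 1 := by
    rw [← duv]
    refine aux_setDist d A B u v hu hv fun a ha b hb => ?_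
    rw [duv]; exact (h1 a b (hne a ha b hb)).1
  refine ⟨d, hm, hA, hB, hAB, hp A hA, hp B hB, hbip, fun a ha b hb => ?_⟩
  rw [hS, dval, if_neg (hne a ha b hb)]
  split_ifs with h <;> simp [h]

open Classical in
theorem aux_two {V : Type*} (G : SimpleGraph V) (A B : Set V)
    (hA : A.Nonempty) (hB : B.Nonempty) (hAB : Disjoint A B)
    (hbip : ∀ u v, G.Adj u v → (u ∈ A ∧ v ∈ B) ∨ (u ∈ B ∧ v ∈ A))
    (hG : ∀ u v, ¬ G.Adj u v) (hAi : A.Infinite) (hBi : B.Infinite) :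
    ∃ d : V → V → ℝ, IsMetric d ∧ ProximinalFor d G A B := by
  obtain ⟨r, hrA, hrB⟩ : ∃ r : V → ℕ, (∀ n, ∃ a ∈ A, r a = n) ∧ ∀ n, ∃ b ∈ B, r b = n := by
    obtain ⟨f, hf⟩ := aux_rank A hAi
    obtain ⟨g, hg⟩ := aux_rank B hBi
    refine ⟨fun x => if x ∈ A then f x else g x, fun n => ?_, fun n => ?_⟩
    · obtain ⟨a, ha, h⟩ := hf n
      exact ⟨a, ha, by simp [ha, h]⟩
    · obtain ⟨b, hb, h⟩ := hg n
      have : b ∉ A := fun h => hAB.ne_of_mem h hb rfl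
      exact ⟨b, hb, by simp [this, h]⟩
  let d : V → V → ℝ := fun x y => if x = y then 0 else 1 + 1 / (((min (r x) (r y) : ℕ) : ℝ) + 1)
  have dval : ∀ x y, x ≠ y → d x y = 1 + 1 / (((min (r x) (r y) : ℕ) : ℝ) + 1) :=
    fun _ _ h => if_neg h
  have d0 : ∀ x, d x x = 0 := fun x => if_pos rfl
  have h1 : ∀ x y, x ≠ y → 1 ≤ d x y ∧ d x y ≤ 2 := by
    intro x y h
    rw [dval x y h]
    have h2 := Nat.one_div_pos_of_nat (α := ℝ) (n := min (r x) (r y))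
    have h3 := Nat.one_div_le_one_div (α := ℝ) (Nat.zero_le (min (r x) (r y)))
    norm_num at h3 h2 ⊢
    constructor <;> linarith
  have hm : IsMetric d := by
    refine aux_metric d d0 (fun x y => ?_) h1
    by_cases h : x = y
    · subst h; rfl
    · rw [dval x y h, dval y x (Ne.symm h), min_comm]
  have hp : ∀ C : Set V, (∀ n, ∃ a ∈ C, r a = n) → Proximinal d C := by
    intro C hC
    refine aux_prox d C fun x => ?_
    by_cases hx : x ∈ C
    · refine ⟨x, hx, fun a' _ => ?_⟩
      rw [d0]; exact hm.1.nonneg _ _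
    · obtain ⟨c, hc, hr⟩ := hC (r x)
      refine ⟨c, hc, fun a' ha' => ?_⟩
      rw [dval x c (fun h => hx (h ▸ hc)), dval x a' (fun h => hx (h ▸ ha')), hr, min_self]
      have := Nat.one_div_le_one_div (α := ℝ) (min_le_left (r x) (r a'))
      linarith
  have hne : ∀ a ∈ A, ∀ b ∈ B, a ≠ b := fun a ha b hb => hAB.ne_of_mem ha hb
  refine ⟨d, hm, hA, hB, hAB, hp A hrA, hp B hrB, hbip, fun a ha b hb => ?_⟩
  refine iff_of_false (hG a b) fun he => ?_
  obtain ⟨a', ha', hra⟩ := hrA (min (r a) (r b) + 1)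
  obtain ⟨b', hb', hrb⟩ := hrB (min (r a) (r b) + 1)
  have hle : SetDist d A B ≤ d a' b' := by
    refine csInf_le ⟨0, ?_⟩ ⟨a', ha', b', hb', rfl⟩
    rintro _ ⟨x, _, y, _, rfl⟩
    exact hm.1.nonneg _ _
  rw [← he, dval a b (hne a ha b hb), dval a' b' (hne a' ha' b' hb'), hra, hrb, min_self] at hle
  have := Nat.one_div_lt_one_div (α := ℝ) (Nat.lt_succ_self (min (r a) (r b)))
  simp only [Nat.succ_eq_add_one] at this
  linarith

/-- Theorem 2.1: for a bipartite graph `G` with fixed parts `A`, `B` (vertex set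
`A ∪ B`), the following are equivalent: (1) `G` is nonempty, or `G` is empty but
both `A` and `B` are infinite; (2) `G` is proximinal for a metric space;
(3) `G` is proximinal for a semimetric space. -/
theorem stmt0 {V : Type*} (G : SimpleGraph V) (A B : Set V)
    (hA : A.Nonempty) (hB : B.Nonempty) (hAB : Disjoint A B)
    (hcover : A ∪ B = Set.univ)
    (hbip : ∀ u v, G.Adj u v → (u ∈ A ∧ v ∈ B) ∨ (u ∈ B ∧ v ∈ A)) :
    List.TFAE [
      G.edgeSet.Nonempty ∨ (G.edgeSet = ∅ ∧ A.Infinite ∧ B.Infinite),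
      ∃ d : V → V → ℝ, IsMetric d ∧ ProximinalFor d G A B,
      ∃ d : V → V → ℝ, IsSemimetric d ∧ ProximinalFor d G A B] := by
  tfae_have 1 → 2 := by
    rintro (⟨e, he⟩ | ⟨he, hAi, hBi⟩)
    · induction e using Sym2.ind with
      | _ u v =>
        rw [SimpleGraph.mem_edgeSet] at he
        rcases hbip u v he with ⟨hu, hv⟩ | ⟨hu, hv⟩
        · exact aux_one G A B hA hB hAB hbip u v hu hv he
        · exact aux_one G A B hA hB hAB hbip v u hv hu he.symm
    · refine aux_two G A B hA hB hAB hbip (fun u v h => ?_) hAi hBi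
      have : s(u, v) ∈ G.edgeSet := h
      rw [he] at this
      exact this
  tfae_have 2 → 3 := by
    rintro ⟨d, hd, h⟩
    exact ⟨d, hd.1, h⟩
  tfae_have 3 → 1 := by
    rintro ⟨d, hd, h⟩
    by_cases hE : G.edgeSet.Nonempty
    · exact Or.inl hE
    have key : ∀ a ∈ A, ∀ b ∈ B, (∀ a' ∈ A, ∀ b' ∈ B, d a b ≤ d a' b') → False := by
      intro a ha b hb hmin
      exact hE ⟨s(a, b), (h.adj_iff a ha b hb).2 (aux_setDist d A B a b ha hb hmin).symm⟩
    refine Or.inr ⟨Set.not_nonempty_iff_eq_empty.1 hE, fun hf => ?_, fun hf => ?_⟩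
    · obtain ⟨a, ha, b, hb, hmin⟩ := aux_min d hd A B hA hf h.proxB
      exact key a ha b hb hmin
    · obtain ⟨b, hb, a, ha, hmin⟩ := aux_min d hd B A hB hf h.proxA
      refine key a ha b hb fun a' ha' b' hb' => ?_
      rw [hd.symm a b, hd.symm a' b']
      exact hmin b' hb' a' ha'
  tfae_finish
end

section
/- A bipartite graph G is not isomorphic to any proximinal graph if and only if G is finite and empty. -/
open Set

universe u

theorem prox_of_min {X : Type*} {d : X → X → ℝ} {A : Set X}
    (h : ∀ x, ∃ a ∈ A, ∀ y ∈ A, d x a ≤ d x y) : Proximinal d A := by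
  intro x
  obtain ⟨a, ha, hm⟩ := h x
  refine ⟨a, ha, ?_⟩
  have : IsLeast ((d x) '' A) (d x a) :=
    ⟨⟨a, ha, rfl⟩, by rintro _ ⟨y, hy, rfl⟩; exact hm y hy⟩
  exact this.csInf_eq.symm

theorem prox_of_finite_range {X : Type*} {d : X → X → ℝ} {A : Set X} (hA : A.Nonempty)
    (S : Set ℝ) (hS : S.Finite) (h : ∀ x y, d x y ∈ S) : Proximinal d A := by
  intro x
  have hf : ((d x) '' A).Finite := hS.subset (by rintro _ ⟨y, _, rfl⟩; exact h x y)
  obtain ⟨a, ha, h⟩ := (hA.image (d x)).csInf_mem hf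
  exact ⟨a, ha, h⟩

open Classical in
theorem edge_case {V : Type*} (G : SimpleGraph V) (A B : Set V)
    (hA : A.Nonempty) (hB : B.Nonempty) (hAB : Disjoint A B)
    (hbip : ∀ u v, G.Adj u v → (u ∈ A ∧ v ∈ B) ∨ (u ∈ B ∧ v ∈ A))
    (hE : ∃ u v, G.Adj u v) :
    ∃ d : V → V → ℝ, IsSemimetric d ∧ ProximinalFor d G A B := by
  let d : V → V → ℝ := fun x y => if x = y then 0 else if G.Adj x y then 1 else 2
  have hS : ∀ x y, d x y ∈ ({0, 1, 2} : Set ℝ) := by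
    intro x y
    simp only [d]
    split_ifs <;> simp
  have hfin : ({0, 1, 2} : Set ℝ).Finite := by simp
  have hne : ∀ a ∈ A, ∀ b ∈ B, a ≠ b := fun a ha b hb h =>
    Set.disjoint_left.1 hAB ha (h ▸ hb)
  have h1 : ∀ a b, G.Adj a b → d a b = 1 := by
    intro a b h
    simp [d, h, h.ne]
  have hD : SetDist d A B = 1 := by
    have : IsLeast (Set.image2 d A B) 1 := by
      constructor
      · obtain ⟨u, v, h⟩ := hE
        rcases hbip u v h with ⟨hu, hv⟩ | ⟨hu, hv⟩
        · exact ⟨u, hu, v, hv, h1 _ _ h⟩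
        · exact ⟨v, hv, u, hu, h1 _ _ h.symm⟩
      · rintro _ ⟨a, ha, b, hb, rfl⟩
        simp only [d, if_neg (hne a ha b hb)]
        split_ifs <;> norm_num
    exact this.csInf_eq
  refine ⟨d, ⟨?_, ?_, ?_⟩, ⟨hA, hB, hAB, prox_of_finite_range hA _ hfin hS,
    prox_of_finite_range hB _ hfin hS, hbip, ?_⟩⟩
  · intro x y
    simp only [d]
    split_ifs <;> norm_num
  · intro x y
    simp only [d, eq_comm (a := x), G.adj_comm x]
  · intro x y
    simp only [d]
    split_ifs with h h' <;> simp [h]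
  · intro a ha b hb
    rw [hD]
    refine ⟨h1 a b, fun h => ?_⟩
    by_contra hn
    simp [d, hne a ha b hb, hn] at h

open Classical in
theorem inf_case (V : Type*) [Infinite V] :
    ∃ d : V ⊕ V → V ⊕ V → ℝ, IsSemimetric d ∧
      ProximinalFor d ⊥ (Set.range Sum.inl) (Set.range Sum.inr) := by
  obtain ⟨f, hf⟩ : ∃ f : V → ℕ, Function.Surjective f :=
    ⟨_, Function.invFun_surjective (Infinite.natEmbedding V).injective⟩
  let g : V ⊕ V → ℕ := Sum.elim f f
  let d : V ⊕ V → V ⊕ V → ℝ := fun x y =>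
    if x = y then 0 else 1 + 1 / ((min (g x) (g y) : ℕ) + 1 : ℝ)
  have hpos : ∀ n : ℕ, (0 : ℝ) < 1 / ((n : ℝ) + 1) := fun n => by positivity
  have hnn : ∀ x y, 0 ≤ d x y := by
    intro x y
    simp only [d]
    split_ifs
    · exact le_rfl
    · linarith [hpos (min (g x) (g y))]
  have hgl : ∀ x y z, x ≠ y → x ≠ z → g x ≤ g y → d x y ≤ d x z := by
    intro x y z hy hz h
    simp only [d, if_neg hy, if_neg hz, min_eq_left h]
    have : min (g x) (g z) ≤ g x := min_le_left _ _
    gcongr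
  have hD : SetDist d (Set.range Sum.inl) (Set.range Sum.inr) ≤ 1 := by
    apply le_of_forall_pos_lt_add
    intro ε hε
    obtain ⟨n, hn⟩ := exists_nat_one_div_lt hε
    obtain ⟨v, hv⟩ := hf n
    have hm : d (Sum.inl v) (Sum.inr v) ∈
      Set.image2 d (Set.range Sum.inl) (Set.range Sum.inr) := ⟨_, ⟨v, rfl⟩, _, ⟨v, rfl⟩, rfl⟩
    refine lt_of_le_of_lt (csInf_le ⟨0, ?_⟩ hm) ?_
    · rintro _ ⟨a, _, b, _, rfl⟩
      exact hnn a b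
    · simp only [d, g]
      simp [hv] at hn ⊢
      exact hn
  refine ⟨d, ⟨hnn, ?_, ?_⟩, ⟨Set.range_nonempty _, Set.range_nonempty _, ?_, ?_, ?_, ?_, ?_⟩⟩
  · intro x y
    simp only [d, eq_comm (a := x), min_comm (g x)]
  · intro x y
    simp only [d]
    split_ifs with h
    · simp [h]
    · simp only [h, iff_false]
      linarith [hpos (min (g x) (g y))]
  · rw [Set.disjoint_left]
    rintro _ ⟨a, rfl⟩ ⟨b, h⟩
    cases h
  · apply prox_of_min
    rintro (v | v)
    · exact ⟨_, ⟨v, rfl⟩, fun y _ => by simpa [d] using hnn (Sum.inl v) y⟩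
    · refine ⟨_, ⟨v, rfl⟩, ?_⟩
      rintro _ ⟨w, rfl⟩
      exact hgl _ _ _ (by simp) (by simp) (by simp [g])
  · apply prox_of_min
    rintro (v | v)
    · refine ⟨_, ⟨v, rfl⟩, ?_⟩
      rintro _ ⟨w, rfl⟩
      exact hgl _ _ _ (by simp) (by simp) (by simp [g])
    · exact ⟨_, ⟨v, rfl⟩, fun y _ => by simpa [d] using hnn (Sum.inr v) y⟩
  · intro u v h
    exact h.elim
  · rintro _ ⟨a, rfl⟩ _ ⟨b, rfl⟩
    refine ⟨fun h => h.elim, fun h => ?_⟩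
    rw [← h] at hD
    simp only [d, reduceCtorEq, if_false] at hD
    linarith [hpos (min (g (Sum.inl a)) (g (Sum.inr b)))]

/-- Corollary 2.2: a bipartite graph `G` (with parts `A`, `B` and vertex set
`A ∪ B = V`) is not isomorphic to any proximinal graph iff `G` is finite and empty. -/
theorem stmt1 {V : Type u} (G : SimpleGraph V) (A B : Set V)
    (hA : A.Nonempty) (hB : B.Nonempty) (hAB : Disjoint A B)
    (hcover : A ∪ B = Set.univ)
    (hbip : ∀ u v, G.Adj u v → (u ∈ A ∧ v ∈ B) ∨ (u ∈ B ∧ v ∈ A)) :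
    (¬ ∃ (X : Type u) (d : X → X → ℝ) (H : SimpleGraph X) (A' B' : Set X),
        IsSemimetric d ∧ ProximinalFor d H A' B' ∧ A' ∪ B' = Set.univ ∧
          Nonempty (G ≃g H)) ↔
      (Finite V ∧ G.edgeSet = ∅) := by
  constructor
  · intro hno
    have hE : ¬ ∃ u v, G.Adj u v := by
      intro hE
      obtain ⟨d, hd, hp⟩ := edge_case G A B hA hB hAB hbip hE
      exact hno ⟨V, d, G, A, B, hd, hp, hcover, ⟨SimpleGraph.Iso.refl⟩⟩
    push Not at hE
    have hG : G = ⊥ := by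
      ext u v
      simp [hE u v]
    refine ⟨?_, by simp [hG]⟩
    by_contra hinf
    rw [not_finite_iff_infinite] at hinf
    obtain ⟨d, hd, hp⟩ := inf_case V
    have hc : Cardinal.mk V = Cardinal.mk (V ⊕ V) := by
      rw [Cardinal.mk_sum, Cardinal.lift_id]
      exact (Cardinal.add_eq_self (Cardinal.aleph0_le_mk V)).symm
    obtain ⟨e⟩ := Cardinal.eq.1 hc
    exact hno ⟨V ⊕ V, d, ⊥, _, _, hd, hp, Set.range_inl_union_range_inr,
      ⟨⟨e, by simp [hG]⟩⟩⟩
  · rintro ⟨hfin, hE⟩ ⟨X, d, H, A', B', hd, hp, hcov, ⟨e⟩⟩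
    have : Finite X := Finite.of_equiv V e.toEquiv
    obtain ⟨a, ha, b, hb, h⟩ :=
      (hp.nonemptyA.image2 (f := d) hp.nonemptyB).csInf_mem (Set.toFinite _)
    have hadj := (hp.adj_iff a ha b hb).2 h
    have h2 : G.Adj (e.symm a) (e.symm b) := e.symm.map_rel_iff.2 hadj
    have h3 : s(e.symm a, e.symm b) ∈ G.edgeSet := h2
    rw [hE] at h3
    exact h3
end

section
/- Let (X,d₁) be a semimetric space and let G = G_{X,d₁}(A,B) be a nonempty proximinal graph for (X,d₁). Then there is a metric d₂ on X such that G is also the proximinal graph G_{X,d₂}(A,B) for the metric space (X,d₂) and the distance set D(X,d₂) := {d₂(x,y) : x, y ∈ X} satisfies |D(X,d₂)| ≤ 3. -/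
open Set

/-- Corollary 2.3: if `G = G_{X,d₁}(A,B)` is a nonempty proximinal graph for a
semimetric space `(X,d₁)`, then there is a metric `d₂` on `X` with
`G = G_{X,d₂}(A,B)` and `|D(X,d₂)| ≤ 3`. -/
theorem stmt2 {X : Type*} (d₁ : X → X → ℝ) (hd₁ : IsSemimetric d₁)
    (G : SimpleGraph X) (A B : Set X) (hG : ProximinalFor d₁ G A B)
    (hne : G.edgeSet.Nonempty) :
    ∃ d₂ : X → X → ℝ, IsMetric d₂ ∧ ProximinalFor d₂ G A B ∧
      ∃ r₁ r₂ r₃ : ℝ, ∀ x y : X, d₂ x y = r₁ ∨ d₂ x y = r₂ ∨ d₂ x y = r₃ := by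
  classical
  obtain ⟨e, he⟩ := hne
  have hedge : ∃ a ∈ A, ∃ b ∈ B, G.Adj a b := by
    induction e using Sym2.ind with
    | _ u v =>
      have h : G.Adj u v := he
      rcases hG.edges_between u v h with ⟨h1, h2⟩ | ⟨h1, h2⟩
      · exact ⟨u, h1, v, h2, h⟩
      · exact ⟨v, h2, u, h1, h.symm⟩
  obtain ⟨a₀, ha₀, b₀, hb₀, hab⟩ := hedge
  let d : X → X → ℝ := fun x y => if x = y then 0 else if G.Adj x y then 1 else 2
  have hval : ∀ x y, d x y = 0 ∨ d x y = 1 ∨ d x y = 2 := by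
    intro x y
    simp only [d]
    split_ifs <;> simp
  have hz : ∀ x y, d x y = 0 ↔ x = y := by
    intro x y
    simp only [d]
    split_ifs <;> simp_all
  have h1 : ∀ x y, d x y = 1 ↔ G.Adj x y := by
    intro x y
    simp only [d]
    split_ifs <;> simp_all
  have hs : ∀ x y, d x y = d y x := by
    intro x y
    simp only [d, eq_comm (a := x), G.adj_comm x]
  have hprox : ∀ S : Set X, S.Nonempty → Proximinal d S := by
    intro S hS x
    have hfin : ((d x) '' S).Finite := by
      apply Set.Finite.subset (s := {0, 1, 2}) (by simp)
      rintro _ ⟨y, -, rfl⟩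
      simpa using hval x y
    obtain ⟨a, ha, h⟩ := (hS.image (d x)).csInf_mem hfin
    exact ⟨a, ha, h⟩
  have hdist : SetDist d A B = 1 := by
    have : IsLeast (Set.image2 d A B) 1 := by
      refine ⟨⟨a₀, ha₀, b₀, hb₀, (h1 _ _).2 hab⟩, ?_⟩
      rintro _ ⟨a, ha, b, hb, rfl⟩
      rcases hval a b with h | h | h
      · have := (hz a b).1 h
        subst this
        exact (Set.disjoint_left.1 hG.disj ha hb).elim
      · rw [h]
      · rw [h]; norm_num
    exact this.csInf_eq
  refine ⟨d, ⟨⟨?_, hs, hz⟩, ?_⟩, ⟨hG.nonemptyA, hG.nonemptyB, hG.disj, hprox A hG.nonemptyA,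
    hprox B hG.nonemptyB, hG.edges_between, ?_⟩, 0, 1, 2, hval⟩
  · intro x y
    rcases hval x y with h | h | h <;> rw [h] <;> norm_num
  · intro x y z
    by_cases hxz : x = z
    · subst hxz
      rw [(hz x x).2 rfl]; simp
    by_cases hzy : z = y
    · subst hzy
      rw [(hz z z).2 rfl]; simp
    have e1 := mt (hz x z).1 hxz
    have e2 := mt (hz z y).1 hzy
    rcases hval x y with h | h | h <;> rcases hval x z with h' | h' | h' <;>
      rcases hval z y with h'' | h'' | h'' <;>
      first | exact absurd h' e1 | exact absurd h'' e2 | (rw [h, h', h'']; norm_num)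
  · intro a _ b _
    rw [hdist, h1]
end

section
/- Let H be a graph, let G = G(A,B) be a bipartite graph with fixed parts A and B, and suppose Φ : V(G) → V(H) is an isomorphism of G and H. Then H is a bipartite graph with parts Φ(A) and Φ(B); moreover G(A,B) is proximinal if and only if H(Φ(A),Φ(B)) is proximinal, and in that case there exist a metric d on the set X = A ∪ B and a metric ρ on the set Y = Φ(A) ∪ Φ(B) such that G = G_{X,d}(A,B), H = H_{Y,ρ}(Φ(A),Φ(B)), and Φ : X → Y is an isometry of (X,d) and (Y,ρ) (that is, d(x,y) = ρ(Φ(x),Φ(y)) for all x, y ∈ X). -/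
open Set

theorem aux_prox_s3 {X : Type*} {d : X → X → ℝ} (hd : IsSemimetric d) (A : Set X) :
    Proximinal d A ↔ ∀ x, ∃ a ∈ A, ∀ b ∈ A, d x a ≤ d x b := by
  unfold Proximinal
  refine forall_congr' fun x => exists_congr fun a => and_congr_right fun ha => ?_
  constructor
  · intro h b hb
    rw [h]
    exact csInf_le ⟨0, by rintro _ ⟨y, _, rfl⟩; exact hd.nonneg _ _⟩ ⟨b, hb, rfl⟩
  · intro h
    have : IsLeast ((d x) '' A) (d x a) := ⟨⟨a, ha, rfl⟩, by rintro _ ⟨y, hy, rfl⟩; exact h y hy⟩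
    exact this.csInf_eq.symm

theorem aux_dist {X : Type*} {d : X → X → ℝ} (hd : IsSemimetric d) (A B : Set X)
    (a : X) (ha : a ∈ A) (b : X) (hb : b ∈ B) :
    d a b = SetDist d A B ↔ ∀ x ∈ A, ∀ y ∈ B, d a b ≤ d x y := by
  unfold SetDist
  constructor
  · intro h x hx y hy
    rw [h]
    exact csInf_le ⟨0, by rintro _ ⟨y, _, z, _, rfl⟩; exact hd.nonneg _ _⟩ ⟨x, hx, y, hy, rfl⟩
  · intro h
    have : IsLeast (Set.image2 d A B) (d a b) :=
      ⟨⟨a, ha, b, hb, rfl⟩, by rintro _ ⟨x, hx, y, hy, rfl⟩; exact h x hx y hy⟩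
    exact this.csInf_eq.symm

theorem aux_for {X : Type*} {d : X → X → ℝ} (hd : IsSemimetric d) (G : SimpleGraph X)
    (A B : Set X) :
    ProximinalFor d G A B ↔ A.Nonempty ∧ B.Nonempty ∧ Disjoint A B ∧
      (∀ x, ∃ a ∈ A, ∀ b ∈ A, d x a ≤ d x b) ∧ (∀ x, ∃ a ∈ B, ∀ b ∈ B, d x a ≤ d x b) ∧
      (∀ u v, G.Adj u v → (u ∈ A ∧ v ∈ B) ∨ (u ∈ B ∧ v ∈ A)) ∧
      (∀ a ∈ A, ∀ b ∈ B, (G.Adj a b ↔ ∀ x ∈ A, ∀ y ∈ B, d a b ≤ d x y)) := by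
  rw [← aux_prox_s3 hd, ← aux_prox_s3 hd]
  constructor
  · rintro ⟨h1, h2, h3, h4, h5, h6, h7⟩
    exact ⟨h1, h2, h3, h4, h5, h6, fun a ha b hb =>
      (h7 a ha b hb).trans (aux_dist hd A B a ha b hb)⟩
  · rintro ⟨h1, h2, h3, h4, h5, h6, h7⟩
    exact ⟨h1, h2, h3, h4, h5, h6, fun a ha b hb =>
      (h7 a ha b hb).trans (aux_dist hd A B a ha b hb).symm⟩

theorem aux_bip {V : Type*} {W : Type*} {G : SimpleGraph V} {H : SimpleGraph W}
    (A B : Set V) (Φ : G ≃g H) :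
    (∀ u v, G.Adj u v → (u ∈ A ∧ v ∈ B) ∨ (u ∈ B ∧ v ∈ A)) ↔
    (∀ u v, H.Adj u v → (u ∈ ⇑Φ '' A ∧ v ∈ ⇑Φ '' B) ∨ (u ∈ ⇑Φ '' B ∧ v ∈ ⇑Φ '' A)) := by
  rw [Φ.surjective.forall₂]
  simp only [Φ.injective.mem_set_image, Φ.map_adj_iff]

theorem aux_semi {V : Type*} {W : Type*} (f : V → W) (hf : Function.Injective f)
    {ρ : W → W → ℝ} (h : IsSemimetric ρ) : IsSemimetric (fun x y => ρ (f x) (f y)) :=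
  ⟨fun _ _ => h.nonneg _ _, fun _ _ => h.symm _ _, fun _ _ => (h.eq_zero_iff _ _).trans hf.eq_iff⟩

theorem aux_trans {V : Type*} {W : Type*} {G : SimpleGraph V} {H : SimpleGraph W}
    (A B : Set V) (Φ : G ≃g H) {ρ : W → W → ℝ} (h : IsSemimetric ρ) :
    ProximinalFor (fun x y => ρ (Φ x) (Φ y)) G A B ↔
      ProximinalFor ρ H (⇑Φ '' A) (⇑Φ '' B) := by
  rw [aux_for (aux_semi _ Φ.injective h), aux_for h]
  simp only [Set.image_nonempty, Set.disjoint_image_iff Φ.injective, Set.exists_mem_image,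
    Φ.surjective.forall, Φ.injective.mem_set_image, Φ.map_adj_iff]

theorem aux_metric_s3 {X : Type*} {d : X → X → ℝ} (hd : IsSemimetric d) :
    ∃ e : X → X → ℝ, IsMetric e ∧ ∀ x y u v, e x y ≤ e u v ↔ d x y ≤ d u v := by
  classical
  let f : ℝ → ℝ := fun t => if t = 0 then 0 else 2 - 1 / (1 + t)
  have f0 : f 0 = 0 := by simp [f]
  have f1 : ∀ t, 0 < t → 1 ≤ f t ∧ f t ≤ 2 := by
    intro t ht
    have h1 : 1 / (1 + t) ≤ 1 := by rw [div_le_one (by linarith)]; linarith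
    have h2 : 0 ≤ 1 / (1 + t) := by positivity
    simp only [f, ht.ne', if_false]
    constructor <;> linarith
  have fs : StrictMonoOn f (Set.Ici 0) := by
    intro s hs t ht hst
    simp only [Set.mem_Ici] at hs ht
    rcases hs.eq_or_lt with h | h
    · subst h
      rw [f0]; linarith [(f1 t hst).1]
    · have := one_div_lt_one_div_of_lt (show 0 < 1 + s by linarith) (show 1 + s < 1 + t by linarith)
      simp only [f, h.ne', (h.trans hst).ne', if_false]
      linarith
  have hz : ∀ t, 0 ≤ t → (f t = 0 ↔ t = 0) := by
    intro t ht
    constructor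
    · intro h
      by_contra hne
      linarith [(f1 t (lt_of_le_of_ne ht (Ne.symm hne))).1]
    · rintro rfl; exact f0
  have hn : ∀ t, 0 ≤ t → 0 ≤ f t := by
    intro t ht
    rcases ht.eq_or_lt with h | h
    · rw [← h, f0]
    · linarith [(f1 t h).1]
  refine ⟨fun x y => f (d x y), ⟨⟨fun x y => hn _ (hd.nonneg x y), fun x y => ?_, fun x y => ?_⟩, ?_⟩, ?_⟩
  · simp only [hd.symm x y]
  · exact (hz _ (hd.nonneg x y)).trans (hd.eq_zero_iff x y)
  · intro x y z
    have hpos : ∀ a b, a ≠ b → 0 < d a b := fun a b hab =>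
      lt_of_le_of_ne (hd.nonneg a b) (fun h => hab ((hd.eq_zero_iff a b).1 h.symm))
    have h0 : ∀ a, d a a = 0 := fun a => (hd.eq_zero_iff a a).2 rfl
    by_cases hxz : x = z
    · subst hxz; simp [h0, f0]
    by_cases hzy : z = y
    · subst hzy; simp [h0, f0]
    by_cases hxy : x = y
    · subst hxy
      simp only [h0, f0]
      linarith [(f1 _ (hpos x z hxz)).1, (f1 _ (hpos z x hzy)).1]
    · linarith [(f1 _ (hpos x z hxz)).1, (f1 _ (hpos z y hzy)).1, (f1 _ (hpos x y hxy)).2]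
  · intro x y u v
    exact fs.le_iff_le (hd.nonneg _ _) (hd.nonneg _ _)

/-- Proposition 2.3 of the paper: if `Φ` is an isomorphism of a bipartite graph
`G = G(A,B)` (with vertex set `A ∪ B`) onto a graph `H`, then `H` is bipartite with
parts `Φ(A)`, `Φ(B)`; moreover `G(A,B)` is proximinal iff `H(Φ(A),Φ(B))` is
proximinal, and in that case there are metrics `d` on `X = A ∪ B` and `ρ` on
`Y = Φ(A) ∪ Φ(B)` with `G = G_{X,d}(A,B)`, `H = H_{Y,ρ}(Φ(A),Φ(B))` and `Φ` an
isometry of `(X,d)` and `(Y,ρ)`. -/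
theorem stmt3 {V : Type*} {W : Type*} (G : SimpleGraph V) (H : SimpleGraph W)
    (A B : Set V)
    (hA : A.Nonempty) (hB : B.Nonempty) (hAB : Disjoint A B)
    (hcover : A ∪ B = Set.univ)
    (hbip : ∀ u v, G.Adj u v → (u ∈ A ∧ v ∈ B) ∨ (u ∈ B ∧ v ∈ A))
    (Φ : G ≃g H) :
    ((⇑Φ '' A).Nonempty ∧ (⇑Φ '' B).Nonempty ∧ Disjoint (⇑Φ '' A) (⇑Φ '' B) ∧
      ⇑Φ '' A ∪ ⇑Φ '' B = Set.univ ∧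
      (∀ u v, H.Adj u v → (u ∈ ⇑Φ '' A ∧ v ∈ ⇑Φ '' B) ∨ (u ∈ ⇑Φ '' B ∧ v ∈ ⇑Φ '' A))) ∧
    ((∃ d : V → V → ℝ, IsSemimetric d ∧ ProximinalFor d G A B) ↔
      (∃ ρ : W → W → ℝ, IsSemimetric ρ ∧ ProximinalFor ρ H (⇑Φ '' A) (⇑Φ '' B))) ∧
    ((∃ d : V → V → ℝ, IsSemimetric d ∧ ProximinalFor d G A B) →
      ∃ (d : V → V → ℝ) (ρ : W → W → ℝ), IsMetric d ∧ IsMetric ρ ∧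
        ProximinalFor d G A B ∧ ProximinalFor ρ H (⇑Φ '' A) (⇑Φ '' B) ∧
        ∀ x y : V, d x y = ρ (Φ x) (Φ y)) := by
  have back : ∀ d : V → V → ℝ,
      d = fun x y => (fun u v => d (Φ.symm u) (Φ.symm v)) (Φ x) (Φ y) := by
    intro d; funext x y; simp
  have fwd : ∀ d : V → V → ℝ, IsSemimetric d → ProximinalFor d G A B →
      ProximinalFor (fun u v => d (Φ.symm u) (Φ.symm v)) H (⇑Φ '' A) (⇑Φ '' B) := by
    intro d hd h
    rw [← aux_trans A B Φ (aux_semi _ Φ.symm.injective hd)]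
    rwa [← back d]
  refine ⟨⟨hA.image _, hB.image _, (Set.disjoint_image_iff Φ.injective).2 hAB, ?_,
    (aux_bip A B Φ).1 hbip⟩, ⟨?_, ?_⟩, ?_⟩
  · rw [← Set.image_union, hcover, Set.image_univ, Φ.surjective.range_eq]
  · rintro ⟨d, hd, h⟩
    exact ⟨_, aux_semi _ Φ.symm.injective hd, fwd d hd h⟩
  · rintro ⟨ρ, hρ, h⟩
    exact ⟨_, aux_semi _ Φ.injective hρ, (aux_trans A B Φ hρ).2 h⟩
  · rintro ⟨d, hd, h⟩
    obtain ⟨e, he, hle⟩ := aux_metric_s3 hd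
    have h' : ProximinalFor e G A B := by
      rw [aux_for he.1]
      simp only [hle]
      exact (aux_for hd G A B).1 h
    refine ⟨e, fun u v => e (Φ.symm u) (Φ.symm v), he,
      ⟨aux_semi _ Φ.symm.injective he.1, fun x y z => he.2 _ _ _⟩, h', fwd e he.1 h', ?_⟩
    intro x y
    simp
end

section
/- Let A and B be proximinal subsets of an ultrametric space (X,d). Then the following statements are equivalent: (1) diam(B) ≤ dist(A,B); (2) the sets A₀ ⊆ A and B₀ ⊆ B are proximinal subsets of X, the equality B₀ = B holds, and every pair (a,b) ∈ A₀ × B₀ is a best proximity pair for the sets A and B. -/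
open Set

theorem prox_iff_min {X : Type*} {d : X → X → ℝ} (hd : IsUltrametric d) (A : Set X) :
    Proximinal d A ↔ ∀ x, ∃ a ∈ A, ∀ b ∈ A, d x a ≤ d x b := by
  refine forall_congr' fun x => exists_congr fun a => and_congr_right fun ha => ?_
  have hb : BddBelow ((d x) '' A) := ⟨0, by rintro _ ⟨y, _, rfl⟩; exact hd.1.nonneg x y⟩
  constructor
  · intro h b hbA
    rw [h]
    exact csInf_le hb ⟨b, hbA, rfl⟩
  · intro h
    apply le_antisymm
    · apply le_csInf (Set.Nonempty.image _ ⟨a, ha⟩)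
      rintro _ ⟨b, hbA, rfl⟩
      exact h b hbA
    · exact csInf_le hb ⟨a, ha, rfl⟩

/-- Theorem (from [CDL2021], Theorem 2.6): for proximinal subsets `A`, `B` of an
ultrametric space `(X,d)`, the inequality `diam B ≤ dist(A,B)` holds iff the sets
`A₀` and `B₀` are proximinal, `B₀ = B`, and every `(a,b) ∈ A₀ × B₀` is a best
proximity pair for `A` and `B`. -/
theorem stmt6 {X : Type*} (d : X → X → ℝ) (hd : IsUltrametric d)
    (A B : Set X) (hA : A.Nonempty) (hB : B.Nonempty)
    (hpA : Proximinal d A) (hpB : Proximinal d B) :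
    (∀ x ∈ B, ∀ y ∈ B, d x y ≤ SetDist d A B) ↔
      (Proximinal d {x ∈ A | ∃ y ∈ B, d x y = SetDist d A B} ∧
       Proximinal d {y ∈ B | ∃ x ∈ A, d x y = SetDist d A B} ∧
       {y ∈ B | ∃ x ∈ A, d x y = SetDist d A B} = B ∧
       ∀ a ∈ {x ∈ A | ∃ y ∈ B, d x y = SetDist d A B},
         ∀ b ∈ {y ∈ B | ∃ x ∈ A, d x y = SetDist d A B},
           d a b = SetDist d A B) := by
  have hlow : ∀ a ∈ A, ∀ b ∈ B, SetDist d A B ≤ d a b := by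
    intro a ha b hb
    exact csInf_le ⟨0, by rintro _ ⟨x, _, y, _, rfl⟩; exact hd.1.nonneg x y⟩ ⟨a, ha, b, hb, rfl⟩
  have hgr : ∀ r, (∀ a ∈ A, ∀ b ∈ B, r ≤ d a b) → r ≤ SetDist d A B := by
    intro r h
    apply le_csInf (hA.image2 hB)
    rintro _ ⟨a, ha, b, hb, rfl⟩
    exact h a ha b hb
  have sy := hd.1.symm
  have ul := hd.2
  have hpA' := (prox_iff_min hd A).1 hpA
  generalize SetDist d A B = D at *
  constructor
  · intro h
    have hnear : ∀ b ∈ B, ∃ a ∈ A, d a b = D := by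
      intro b hb
      obtain ⟨a, ha, hmin⟩ := hpA' b
      refine ⟨a, ha, le_antisymm (hgr _ fun a' ha' b' hb' => ?_) (hlow a ha b hb)⟩
      rw [sy a b]
      refine (hmin a' ha').trans ((ul b a' b').trans (max_le ?_ (sy b' a').le))
      exact (h b hb b' hb').trans (hlow a' ha' b' hb')
    have hBB : {y ∈ B | ∃ x ∈ A, d x y = D} = B := by
      ext b
      exact ⟨fun hb => hb.1, fun hb => ⟨hb, hnear b hb⟩⟩
    have hpair : ∀ a ∈ {x ∈ A | ∃ y ∈ B, d x y = D}, ∀ b ∈ B, d a b = D := by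
      rintro a ⟨ha, y, hy, hay⟩ b hb
      exact le_antisymm ((ul a b y).trans (max_le hay.le (h y hy b hb))) (hlow a ha b hb)
    refine ⟨?_, by rw [hBB]; exact hpB, hBB, fun a ha b hb => hpair a ha b hb.1⟩
    rw [prox_iff_min hd]
    intro x
    obtain ⟨b, hb⟩ := hB
    obtain ⟨a0, ha0, hab⟩ := hnear b hb
    by_cases hx : d x a0 ≤ D
    · obtain ⟨a1, ha1, hmin⟩ := hpA' x
      refine ⟨a1, ⟨ha1, b, hb, le_antisymm ?_ (hlow a1 ha1 b hb)⟩, fun a ha => hmin a ha.1⟩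
      have h1 : d a1 x ≤ D := by rw [sy]; exact (hmin a0 ha0).trans hx
      have h2 : d x b ≤ D := (ul x b a0).trans (max_le hx hab.le)
      exact (ul a1 b x).trans (max_le h1 h2)
    · refine ⟨a0, ⟨ha0, b, hb, hab⟩, fun a ha => ?_⟩
      have h1 : d a a0 ≤ D :=
        (ul a a0 b).trans (max_le (hpair a ha b hb).le (by rw [sy]; exact hab.le))
      rcases le_max_iff.1 (ul x a0 a) with h2 | h2
      · exact h2
      · exact absurd (h2.trans h1) hx
  · rintro ⟨-, -, hBB, hp⟩ x hx y hy
    have hx' := hx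
    have hy' := hy
    rw [← hBB] at hx' hy'
    obtain ⟨_, a, ha, hax⟩ := hx'
    have := hp a ⟨ha, x, hx, hax⟩ y hy'
    exact (ul x y a).trans (max_le (by rw [sy]; exact hax.le) this.le)
end

section
/- Let G = G_{X,d}(A,B) be a proximinal graph for an ultrametric space (X,d). Then the following statements are equivalent: (1) diam(B) ≤ dist(A,B); (2) G is nonempty and G' is a complete bipartite graph such that B ⊆ V(G'). -/
open Set

/-- Proposition 2.5: for a proximinal graph `G = G_{X,d}(A,B)` over an ultrametric
space `(X,d)`, `diam B ≤ dist(A,B)` iff `G` is nonempty and `G'` (the subgraph of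
`G` induced by the non-isolated vertices, i.e. by `G.support`) is a complete
bipartite graph with `B ⊆ V(G')`. -/
theorem stmt7 {X : Type*} (d : X → X → ℝ) (hd : IsUltrametric d)
    (G : SimpleGraph X) (A B : Set X) (hG : ProximinalFor d G A B) :
    (∀ x ∈ B, ∀ y ∈ B, d x y ≤ SetDist d A B) ↔
      (G.edgeSet.Nonempty ∧
        (∃ P Q : Set X, P.Nonempty ∧ Q.Nonempty ∧ Disjoint P Q ∧
          P ∪ Q = G.support ∧
          ∀ u v, G.Adj u v ↔ ((u ∈ P ∧ v ∈ Q) ∨ (u ∈ Q ∧ v ∈ P))) ∧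
        B ⊆ G.support) := by
  obtain ⟨⟨hnn, hsymm, h0⟩, hult⟩ := hd
  obtain ⟨hA, hB, hdisj, pA, pB, heb, hadj⟩ := hG
  have hle : ∀ a ∈ A, ∀ b ∈ B, SetDist d A B ≤ d a b := by
    intro a ha b hb
    apply csInf_le
    · refine ⟨0, ?_⟩
      rintro _ ⟨x, _, y, _, rfl⟩
      exact hnn x y
    · exact ⟨a, ha, b, hb, rfl⟩
  constructor
  · intro h
    have key : ∀ b ∈ B, ∃ a ∈ A, G.Adj a b := by
      intro b hb
      obtain ⟨a, ha, hda⟩ := pA b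
      refine ⟨a, ha, (hadj a ha b hb).2 (le_antisymm ?_ (hle a ha b hb))⟩
      apply le_csInf (hA.image2 hB)
      rintro _ ⟨x, hx, y, hy, rfl⟩
      have h1 : d b a ≤ d b x := by
        rw [hda]
        apply csInf_le
        · refine ⟨0, ?_⟩
          rintro _ ⟨z, _, rfl⟩
          exact hnn b z
        · exact ⟨x, hx, rfl⟩
      rw [hsymm a b]
      refine h1.trans ((hult b x y).trans (max_le ?_ ?_))
      · exact (h b hb y hy).trans (hle x hx y hy)
      · exact (hsymm y x).le
    have key2 : ∀ a ∈ A, ∀ b ∈ B, ∀ c ∈ B, G.Adj a b → G.Adj a c := by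
      intro a ha b hb c hc hab
      refine (hadj a ha c hc).2 (le_antisymm ?_ (hle a ha c hc))
      exact (hult a c b).trans (max_le ((hadj a ha b hb).1 hab).le (h b hb c hc))
    obtain ⟨b0, hb0⟩ := hB
    obtain ⟨a0, ha0, h00⟩ := key b0 hb0
    have hadj' : ∀ u v, G.Adj u v ↔ ((u ∈ {a | a ∈ A ∧ G.Adj a b0} ∧ v ∈ B) ∨
        (u ∈ B ∧ v ∈ {a | a ∈ A ∧ G.Adj a b0})) := by
      intro u v
      constructor
      · intro huv
        rcases heb u v huv with ⟨hu, hv⟩ | ⟨hu, hv⟩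
        · exact Or.inl ⟨⟨hu, key2 u hu v hv b0 hb0 huv⟩, hv⟩
        · exact Or.inr ⟨hu, ⟨hv, key2 v hv u hu b0 hb0 huv.symm⟩⟩
      · rintro (⟨⟨hu, h1⟩, hv⟩ | ⟨hu, ⟨hv, h1⟩⟩)
        · exact key2 u hu b0 hb0 v hv h1
        · exact (key2 v hv b0 hb0 u hu h1).symm
    have hBs : B ⊆ G.support := by
      intro b hb
      obtain ⟨a, _, h1⟩ := key b hb
      exact ⟨a, h1.symm⟩
    refine ⟨⟨s(a0, b0), h00⟩, ⟨{a | a ∈ A ∧ G.Adj a b0}, B, ⟨a0, ha0, h00⟩, ⟨b0, hb0⟩,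
      hdisj.mono_left (fun x hx => hx.1), ?_, hadj'⟩, hBs⟩
    apply Set.Subset.antisymm
    · rintro x (hx | hx)
      · exact ⟨b0, hx.2⟩
      · exact hBs hx
    · rintro x ⟨y, hxy⟩
      rcases (hadj' x y).1 hxy with h1 | h1
      · exact Or.inl h1.1
      · exact Or.inr h1.1
  · rintro ⟨-, ⟨P, Q, -, -, hPQ, hU, hc⟩, hBs⟩ x hx y hy
    have hnB : ¬ G.Adj x y := by
      intro hxy
      rcases heb x y hxy with h1 | h1
      · exact Set.disjoint_left.1 hdisj h1.1 hx
      · exact Set.disjoint_left.1 hdisj h1.2 hy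
    obtain ⟨a, hxa⟩ := hBs hx
    replace hxa : G.Adj x a := hxa
    have haA : a ∈ A := by
      rcases heb x a hxa with h1 | h1
      · exact (Set.disjoint_left.1 hdisj h1.1 hx).elim
      · exact h1.2
    have hyU : y ∈ P ∪ Q := hU ▸ hBs hy
    have hay : G.Adj a y := by
      rw [hc] at hxa hnB ⊢
      rcases hyU with h1 | h1 <;> tauto
    refine (hult x y a).trans (max_le ?_ ((hadj a haA y hy).1 hay).le)
    rw [hsymm]
    exact ((hadj a haA x hx).1 hxa.symm).le
end

section
/- Let G = G_{Y,ρ}(C,D) be a proximinal graph for an ultrametric space (Y,ρ). Then the following statements are equivalent: (1) G is connected; (2) diam(C ∪ D) ≤ dist(C,D); (3) G is a complete bipartite graph. -/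
open Set

/-- Corollary 2.10: for a proximinal graph `G = G_{Y,ρ}(C,D)` over an ultrametric
space `(Y,ρ)`, the following are equivalent: (1) `G` is connected (as a graph with
vertex set `C ∪ D`); (2) `diam (C ∪ D) ≤ dist(C,D)`; (3) `G` is a complete
bipartite graph. -/
theorem stmt8 {Y : Type*} (ρ : Y → Y → ℝ) (hρ : IsUltrametric ρ)
    (G : SimpleGraph Y) (C D : Set Y) (hG : ProximinalFor ρ G C D) :
    List.TFAE [
      (G.induce (C ∪ D)).Connected,
      ∀ x ∈ C ∪ D, ∀ y ∈ C ∪ D, ρ x y ≤ SetDist ρ C D,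
      ∀ c ∈ C, ∀ e ∈ D, G.Adj c e] := by
  have hs := hρ.1.symm
  have hle : ∀ c ∈ C, ∀ e ∈ D, SetDist ρ C D ≤ ρ c e := fun c hc e he =>
    csInf_le ⟨0, by rintro _ ⟨a, _, b, _, rfl⟩; exact hρ.1.nonneg a b⟩ ⟨c, hc, e, he, rfl⟩
  have hr : 0 ≤ SetDist ρ C D :=
    Real.sInf_nonneg (by rintro _ ⟨a, _, b, _, rfl⟩; exact hρ.1.nonneg a b)
  obtain ⟨c₀, hc₀⟩ := hG.nonemptyA
  obtain ⟨e₀, he₀⟩ := hG.nonemptyB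
  have hadj : ∀ u v, G.Adj u v → ρ u v ≤ SetDist ρ C D := by
    intro u v h
    rcases hG.edges_between u v h with ⟨hu, hv⟩ | ⟨hu, hv⟩
    · exact ((hG.adj_iff u hu v hv).1 h).le
    · rw [hs]
      exact ((hG.adj_iff v hv u hu).1 h.symm).le
  tfae_have 1 → 2 := by
    intro h x hx y hy
    obtain ⟨w⟩ := h.preconnected ⟨x, hx⟩ ⟨y, hy⟩
    have key : ∀ (u v : ↥(C ∪ D)), (G.induce (C ∪ D)).Walk u v →
        ρ u.1 v.1 ≤ SetDist ρ C D := by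
      intro u v w
      induction w with
      | nil => rw [(hρ.1.eq_zero_iff _ _).2 rfl]; exact hr
      | cons h p ih => exact (hρ.2 _ _ _).trans (max_le (hadj _ _ h) ih)
    exact key _ _ w
  tfae_have 2 → 3 := by
    intro h c hc e he
    exact (hG.adj_iff c hc e he).2
      (le_antisymm (h c (Or.inl hc) e (Or.inr he)) (hle c hc e he))
  tfae_have 3 → 1 := by
    intro h
    have hCD : ∀ (c e : Y) (hc : c ∈ C) (he : e ∈ D),
        (G.induce (C ∪ D)).Reachable ⟨c, Or.inl hc⟩ ⟨e, Or.inr he⟩ := by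
      intro c e hc he
      apply SimpleGraph.Adj.reachable
      exact h c hc e he
    have h0 : ∀ x : ↥(C ∪ D), (G.induce (C ∪ D)).Reachable ⟨c₀, Or.inl hc₀⟩ x := by
      rintro ⟨x, hx | hx⟩
      · exact (hCD c₀ e₀ hc₀ he₀).trans (hCD x e₀ hx he₀).symm
      · exact hCD c₀ x hc₀ hx
    haveI : Nonempty ↥(C ∪ D) := ⟨⟨c₀, Or.inl hc₀⟩⟩
    exact ⟨fun x y => (h0 x).symm.trans (h0 y)⟩
  tfae_finish
end

section
/- Let G be a nonempty graph. Then the following statements are equivalent: (1) G' is the disjoint union of complete bipartite graphs; (2) there is an ultrametric space (X,d) such that G is isomorphic to a proximinal graph for (X,d). -/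
open Set

universe u

/-- `G'` (vertex set `G.support`, edge set `E(G)`) is a disjoint union of complete
bipartite graphs. -/
def SupportIsDisjointUnionOfCompleteBipartite {V : Type u} (G : SimpleGraph V) : Prop :=
  ∃ (ι : Type u) (C D : ι → Set V),
    (∀ i, (C i).Nonempty) ∧ (∀ i, (D i).Nonempty) ∧ (∀ i, Disjoint (C i) (D i)) ∧
    (Pairwise fun i j => Disjoint (C i ∪ D i) (C j ∪ D j)) ∧
    (⋃ i, C i ∪ D i) = G.support ∧
    (∀ u v, G.Adj u v ↔ ∃ i, (u ∈ C i ∧ v ∈ D i) ∨ (u ∈ D i ∧ v ∈ C i))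

/-- Corollary 2.13: a nonempty graph `G` satisfies: `G'` is the disjoint union of
complete bipartite graphs iff there is an ultrametric space `(X,d)` such that `G`
is isomorphic to a proximinal graph for `(X,d)`. -/
theorem stmt11 {V : Type u} (G : SimpleGraph V) (hne : G.edgeSet.Nonempty) :
    SupportIsDisjointUnionOfCompleteBipartite G ↔
      ∃ (X : Type u) (d : X → X → ℝ) (H : SimpleGraph X) (A B : Set X),
        IsUltrametric d ∧ ProximinalFor d H A B ∧ A ∪ B = Set.univ ∧
        Nonempty (G ≃g H) := by
  constructor
  · rintro ⟨ι, C, D, hC, hD, hCD, hP, hU, hA⟩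
    classical
    have huniq : ∀ i j x, x ∈ C i ∪ D i → x ∈ C j ∪ D j → i = j := by
      intro i j x hi hj
      by_contra h
      exact Set.disjoint_left.1 (hP h) hi hj
    let r : V → V → Prop := fun x y => ∃ i, x ∈ C i ∪ D i ∧ y ∈ C i ∪ D i
    have rsymm : ∀ x y, r x y → r y x := fun x y ⟨i, h1, h2⟩ => ⟨i, h2, h1⟩
    have rtrans : ∀ x y z, r x y → r y z → r x z := by
      rintro x y z ⟨i, h1, h2⟩ ⟨j, h3, h4⟩
      obtain rfl := huniq i j y h2 h3
      exact ⟨i, h1, h4⟩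
    let d : V → V → ℝ := fun x y => if x = y then 0 else if r x y then 1 else 2
    have dvals : ∀ x y, d x y = 0 ∨ d x y = 1 ∨ d x y = 2 := by
      intro x y; simp only [d]; split_ifs <;> simp
    have dfin : ∀ S : Set ℝ, S ⊆ {0, 1, 2} → S.Nonempty → sInf S ∈ S := by
      intro S hS hn
      exact hn.csInf_mem ((Set.toFinite _).subset hS)
    have hprox : ∀ S : Set V, S.Nonempty → Proximinal d S := by
      intro S hS x
      have := dfin (d x '' S) (by rintro _ ⟨y, _, rfl⟩; simpa using dvals x y) (hS.image _)
      obtain ⟨a, ha, h⟩ := this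
      exact ⟨a, ha, h⟩
    obtain ⟨⟨p, q⟩, hpq⟩ := hne
    have hpq : G.Adj p q := hpq
    obtain ⟨i0, -⟩ := (hA p q).1 hpq
    obtain ⟨c0, hc0⟩ := hC i0
    obtain ⟨d0, hd0⟩ := hD i0
    have hdisj : ∀ i j x, x ∈ C i → x ∈ D j → False := by
      intro i j x hi hj
      obtain rfl := huniq i j x (Or.inl hi) (Or.inr hj)
      exact Set.disjoint_left.1 (hCD i) hi hj
    have hc0' : c0 ∈ (⋃ i, D i)ᶜ := by
      intro h
      obtain ⟨j, hj⟩ := Set.mem_iUnion.1 h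
      exact hdisj _ _ _ hc0 hj
    have hd0' : d0 ∈ (⋃ i, D i) := Set.mem_iUnion.2 ⟨i0, hd0⟩
    have hone : ∀ a ∈ (⋃ i, D i)ᶜ, ∀ b ∈ (⋃ i, D i), (d a b = 1 ↔ r a b) ∧ 1 ≤ d a b := by
      intro a ha b hb
      have : a ≠ b := by rintro rfl; exact ha hb
      by_cases h : r a b <;> simp [d, this, h]
    have hdist : SetDist d (⋃ i, D i)ᶜ (⋃ i, D i) = 1 := by
      apply IsLeast.csInf_eq
      refine ⟨⟨c0, hc0', d0, hd0', ((hone _ hc0' _ hd0').1).2 ⟨i0, Or.inl hc0, Or.inr hd0⟩⟩, ?_⟩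
      rintro _ ⟨a, ha, b, hb, rfl⟩
      exact (hone a ha b hb).2
    refine ⟨V, d, G, (⋃ i, D i)ᶜ, ⋃ i, D i, ⟨⟨?_, ?_, ?_⟩, ?_⟩, ⟨⟨c0, hc0'⟩, ⟨d0, hd0'⟩, ?_, hprox _ ⟨c0, hc0'⟩, hprox _ ⟨d0, hd0'⟩, ?_, ?_⟩, ?_, ⟨SimpleGraph.Iso.refl⟩⟩
    · intro x y
      rcases dvals x y with h | h | h <;> rw [h] <;> norm_num
    · intro x y
      have h1 : r x y ↔ r y x := ⟨rsymm _ _, rsymm _ _⟩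
      simp only [d, h1, eq_comm (a := x) (b := y)]
    · intro x y
      simp only [d]
      split_ifs <;> simp_all
    · intro x y z
      have := rtrans x z y
      by_cases h1 : x = z
      · subst h1; exact le_max_right _ _
      by_cases h2 : z = y
      · subst h2; exact le_max_left _ _
      by_cases h3 : r x z <;> by_cases h4 : r z y
      · have h5 := this h3 h4
        simp only [d, h1, h2, h3, h4, h5, if_true, if_false]
        split_ifs <;> norm_num
      all_goals
        simp only [d, h1, h2, h3, h4, if_true, if_false]
        split_ifs <;> norm_num
    · exact disjoint_compl_left
    · intro u v h
      obtain ⟨i, ⟨h1, h2⟩ | ⟨h1, h2⟩⟩ := (hA u v).1 h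
      · left
        refine ⟨fun h => ?_, Set.mem_iUnion.2 ⟨i, h2⟩⟩
        obtain ⟨j, hj⟩ := Set.mem_iUnion.1 h
        exact hdisj _ _ _ h1 hj
      · right
        refine ⟨Set.mem_iUnion.2 ⟨i, h1⟩, fun h => ?_⟩
        obtain ⟨j, hj⟩ := Set.mem_iUnion.1 h
        exact hdisj _ _ _ h2 hj
    · intro a ha b hb
      rw [hdist, (hone a ha b hb).1, hA]
      constructor
      · rintro ⟨i, ⟨h1, h2⟩ | ⟨h1, h2⟩⟩
        · exact ⟨i, Or.inl h1, Or.inr h2⟩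
        · exact ⟨i, Or.inr h1, Or.inl h2⟩
      · rintro ⟨i, h1, h2⟩
        refine ⟨i, Or.inl ⟨?_, ?_⟩⟩
        · rcases h1 with h1 | h1
          · exact h1
          · exact absurd (Set.mem_iUnion.2 ⟨i, h1⟩) ha
        · rcases h2 with h2 | h2
          · obtain ⟨j, hj⟩ := Set.mem_iUnion.1 hb
            exact (hdisj _ _ _ h2 hj).elim
          · exact h2
    · exact Set.compl_union_self _
  · rintro ⟨X, d, H, A, B, ⟨⟨hnn, hsymm, h0⟩, hult⟩, hH, hAB, ⟨f⟩⟩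
    obtain ⟨t, ht⟩ : ∃ t, t = SetDist d A B := ⟨_, rfl⟩
    have hadj := hH.adj_iff
    rw [← ht] at hadj
    have hlow : ∀ a ∈ A, ∀ b ∈ B, t ≤ d a b := by
      intro a ha b hb
      rw [ht]
      exact csInf_le ⟨0, by rintro _ ⟨x, _, y, _, rfl⟩; exact hnn x y⟩ ⟨a, ha, b, hb, rfl⟩
    have ht0 : 0 ≤ t := by
      rw [ht]
      exact Real.sInf_nonneg (by rintro _ ⟨x, _, y, _, rfl⟩; exact hnn x y)
    have hG : ∀ u v, G.Adj u v → d (f u) (f v) = t ∧ ((f u ∈ A ∧ f v ∈ B) ∨ (f u ∈ B ∧ f v ∈ A)) := by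
      intro u v h
      have h' : H.Adj (f u) (f v) := f.map_adj_iff.2 h
      have h2 := hH.edges_between _ _ h'
      refine ⟨?_, h2⟩
      rcases h2 with ⟨h3, h4⟩ | ⟨h3, h4⟩
      · exact (hadj _ h3 _ h4).1 h'
      · rw [hsymm]; exact (hadj _ h4 _ h3).1 h'.symm
    have hG2 : ∀ u v, f u ∈ A → f v ∈ B → d (f u) (f v) ≤ t → G.Adj u v := by
      intro u v h1 h2 h3
      exact f.map_adj_iff.1 ((hadj _ h1 _ h2).2 (le_antisymm h3 (hlow _ h1 _ h2)))
    have htr : ∀ x y z, d x z ≤ t → d z y ≤ t → d x y ≤ t :=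
      fun x y z h1 h2 => (hult x y z).trans (max_le h1 h2)
    have hrefl : ∀ x, d x x ≤ t := fun x => by rw [(h0 x x).2 rfl]; exact ht0
    let cl : V → Set V := fun v => {w | w ∈ G.support ∧ d (f v) (f w) ≤ t}
    have hcl : ∀ v w x, x ∈ cl v → x ∈ cl w → cl v = cl w := by
      rintro v w x ⟨_, h1⟩ ⟨_, h2⟩
      have h3 : d (f v) (f w) ≤ t := htr _ _ _ h1 (by rw [hsymm]; exact h2)
      ext y
      constructor
      · rintro ⟨h4, h5⟩
        exact ⟨h4, htr _ _ (f v) (by rw [hsymm]; exact h3) h5⟩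
      · rintro ⟨h4, h5⟩
        exact ⟨h4, htr _ _ (f w) h3 h5⟩
    have hself : ∀ v ∈ G.support, v ∈ cl v := fun v hv => ⟨hv, hrefl _⟩
    have hnb : ∀ v w, G.Adj v w → w ∈ cl v := fun v w h => ⟨⟨v, h.symm⟩, (hG v w h).1.le⟩
    have huni : ∀ x, f x ∈ A ∨ f x ∈ B := fun x => by
      have : f x ∈ A ∪ B := by rw [hAB]; trivial
      exact this
    have hd : ∀ x, f x ∈ A → f x ∈ B → False := fun x h1 h2 => Set.disjoint_left.1 hH.disj h1 h2
    refine ⟨{S : Set V // ∃ v ∈ G.support, S = cl v}, fun S => S.1 ∩ f ⁻¹' A, fun S => S.1 ∩ f ⁻¹' B, ?_, ?_, ?_, ?_, ?_, ?_⟩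
    · rintro ⟨_, v, hv, rfl⟩
      obtain ⟨w, hw⟩ := id hv
      rcases (hG v w hw).2 with ⟨h1, h2⟩ | ⟨h1, h2⟩
      · exact ⟨v, hself v hv, h1⟩
      · exact ⟨w, hnb v w hw, h2⟩
    · rintro ⟨_, v, hv, rfl⟩
      obtain ⟨w, hw⟩ := id hv
      rcases (hG v w hw).2 with ⟨h1, h2⟩ | ⟨h1, h2⟩
      · exact ⟨w, hnb v w hw, h2⟩
      · exact ⟨v, hself v hv, h1⟩
    · intro S
      exact Set.disjoint_left.2 fun x h1 h2 => hd x h1.2 h2.2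
    · rintro ⟨_, v, hv, rfl⟩ ⟨_, w, hw, rfl⟩ hne'
      refine Set.disjoint_left.2 fun x h1 h2 => hne' (Subtype.ext (hcl v w x ?_ ?_))
      · rcases h1 with h | h <;> exact h.1
      · rcases h2 with h | h <;> exact h.1
    · ext x
      rw [Set.mem_iUnion]
      constructor
      · rintro ⟨⟨_, v, hv, rfl⟩, h | h⟩ <;> exact h.1.1
      · intro hx
        refine ⟨⟨_, x, hx, rfl⟩, ?_⟩
        rcases huni x with h | h
        · exact Or.inl ⟨hself x hx, h⟩
        · exact Or.inr ⟨hself x hx, h⟩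
    · intro u v
      constructor
      · intro h
        have hu : u ∈ G.support := ⟨v, h⟩
        refine ⟨⟨_, u, hu, rfl⟩, ?_⟩
        rcases (hG u v h).2 with ⟨h1, h2⟩ | ⟨h1, h2⟩
        · exact Or.inl ⟨⟨hself u hu, h1⟩, hnb u v h, h2⟩
        · exact Or.inr ⟨⟨hself u hu, h1⟩, hnb u v h, h2⟩
      · rintro ⟨⟨_, w, hw, rfl⟩, ⟨h1, h2⟩ | ⟨h1, h2⟩⟩
        · exact hG2 u v h1.2 h2.2 (htr _ _ (f w) (by rw [hsymm]; exact h1.1.2) h2.1.2)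
        · exact (hG2 v u h2.2 h1.2 (htr _ _ (f w) (by rw [hsymm]; exact h2.1.2) h1.1.2)).symm
end

section
/- Let G be a bipartite graph with fixed parts A and B. Then the following three statements are equivalent: (1) either G is nonempty, or G is empty but at least one of the parts A, B is infinite; (2) G is farthest for a metric space; (3) G is farthest for a semimetric space. -/
open Set

theorem metric_aux {V : Type*} (f : V → V → ℝ) (hs : ∀ x y, f x y = f y x)
    (h1 : ∀ x y, 1 ≤ f x y) (h2 : ∀ x y, f x y ≤ 2) :
    ∃ d : V → V → ℝ, IsMetric d ∧ ∀ x y, x ≠ y → d x y = f x y := by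
  classical
  refine ⟨fun x y => if x = y then 0 else f x y, ⟨⟨?_, ?_, ?_⟩, ?_⟩, ?_⟩
  · intro x y
    have := h1 x y
    split_ifs <;> linarith
  · intro x y
    have := hs x y
    by_cases h : x = y
    · simp [h]
    · simp [h, Ne.symm h, this]
  · intro x y
    have := h1 x y
    by_cases h : x = y
    · simp [h]
    · simp only [h, if_false, iff_false]
      linarith
  · intro x y z
    have a1 := h1 x z
    have a2 := h1 z y
    have a3 := h2 x y
    by_cases h : x = z
    · subst h; simp
    · by_cases h' : z = y
      · subst h'; simp
      · simp only [h, h', if_false]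
        split_ifs <;> linarith
  · intro x y h
    simp [h]

theorem unbdd_aux {V : Type*} (S : Set V) (hS : S.Infinite) :
    ∃ g : V → ℕ, ∀ n, ∃ x ∈ S, g x = n := by
  have e := hS.natEmbedding
  refine ⟨Function.invFun (fun n => (e n : V)), fun n => ⟨e n, (e n).2, ?_⟩⟩
  exact Function.leftInverse_invFun (f := fun n => (e n : V))
    (fun a b h => e.injective (Subtype.ext h)) n

/-- Theorem 3.2: for a bipartite graph `G` with fixed parts `A`, `B` (vertex set
`A ∪ B`), the following are equivalent: (1) `G` is nonempty, or `G` is empty but at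
least one of the parts `A`, `B` is infinite; (2) `G` is farthest for a metric
space; (3) `G` is farthest for a semimetric space. -/
theorem stmt12 {V : Type*} (G : SimpleGraph V) (A B : Set V)
    (hA : A.Nonempty) (hB : B.Nonempty) (hAB : Disjoint A B)
    (hcover : A ∪ B = Set.univ)
    (hbip : ∀ u v, G.Adj u v → (u ∈ A ∧ v ∈ B) ∨ (u ∈ B ∧ v ∈ A)) :
    List.TFAE [
      G.edgeSet.Nonempty ∨ (G.edgeSet = ∅ ∧ (A.Infinite ∨ B.Infinite)),
      ∃ d : V → V → ℝ, IsMetric d ∧ FarthestFor d G A B,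
      ∃ d : V → V → ℝ, IsSemimetric d ∧ FarthestFor d G A B] := by
  have hne : ∀ a ∈ A, ∀ b ∈ B, a ≠ b := fun a ha b hb h =>
    Set.disjoint_left.mp hAB ha (h ▸ hb)
  tfae_have 1 → 2 := by
    classical
    rintro (⟨e, he⟩ | ⟨he, hinf⟩)
    · obtain ⟨d, hd, hf⟩ := metric_aux (fun x y => if G.Adj x y then (2:ℝ) else 1)
        (fun x y => by simp [G.adj_comm])
        (fun x y => by split_ifs <;> norm_num)
        (fun x y => by split_ifs <;> norm_num)
      have hex : ∃ a ∈ A, ∃ b ∈ B, G.Adj a b := by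
        induction e with
        | _ u v =>
          have h : G.Adj u v := he
          rcases hbip u v h with ⟨h1, h2⟩ | ⟨h1, h2⟩
          · exact ⟨u, h1, v, h2, h⟩
          · exact ⟨v, h2, u, h1, h.symm⟩
      obtain ⟨a0, ha0, b0, hb0, h0⟩ := hex
      refine ⟨d, hd, hA, hB, hAB, hbip, fun a ha b hb => ⟨fun h x hx y hy => ?_, fun h => ?_⟩⟩
      · rw [hf _ _ (hne x hx y hy), hf _ _ (hne a ha b hb), if_pos h]
        split_ifs <;> norm_num
      · have := h a0 ha0 b0 hb0
        rw [hf _ _ (hne a0 ha0 b0 hb0), hf _ _ (hne a ha b hb), if_pos h0] at this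
        by_contra hn
        rw [if_neg hn] at this
        norm_num at this
    · have hg : ∃ g : V → ℕ, ∀ a ∈ A, ∀ b ∈ B, ∃ x ∈ A, ∃ y ∈ B, g a + g b < g x + g y := by
        rcases hinf with h | h
        · obtain ⟨g, hg⟩ := unbdd_aux A h
          refine ⟨g, fun a ha b hb => ?_⟩
          obtain ⟨x, hx, hxn⟩ := hg (g a + 1)
          exact ⟨x, hx, b, hb, by omega⟩
        · obtain ⟨g, hg⟩ := unbdd_aux B h
          refine ⟨g, fun a ha b hb => ?_⟩
          obtain ⟨x, hx, hxn⟩ := hg (g b + 1)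
          exact ⟨a, ha, x, hx, by omega⟩
      obtain ⟨g, hg⟩ := hg
      obtain ⟨d, hd, hf⟩ := metric_aux
        (fun x y => 2 - 1 / (((g x + g y : ℕ) : ℝ) + 1))
        (fun x y => by rw [add_comm (g x)])
        (fun x y => by
          have : 1 / (((g x + g y : ℕ) : ℝ) + 1) ≤ 1 := by
            rw [div_le_one (by positivity)]
            have : (0:ℝ) ≤ ((g x + g y : ℕ) : ℝ) := Nat.cast_nonneg _
            linarith
          linarith)
        (fun x y => by
          have : 0 ≤ 1 / (((g x + g y : ℕ) : ℝ) + 1) := by positivity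
          linarith)
      refine ⟨d, hd, hA, hB, hAB, hbip, fun a ha b hb => ⟨fun h => ?_, fun h => ?_⟩⟩
      · have : s(a, b) ∈ G.edgeSet := h
        rw [he] at this
        exact this.elim
      · obtain ⟨x, hx, y, hy, hlt⟩ := hg a ha b hb
        have := h x hx y hy
        rw [hf _ _ (hne x hx y hy), hf _ _ (hne a ha b hb)] at this
        have h3 : 1 / (((g x + g y : ℕ) : ℝ) + 1) < 1 / (((g a + g b : ℕ) : ℝ) + 1) := by
          apply one_div_lt_one_div_of_lt (by positivity)
          have : ((g a + g b : ℕ) : ℝ) < ((g x + g y : ℕ) : ℝ) := Nat.cast_lt.mpr hlt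
          linarith
        linarith
  tfae_have 2 → 3 := fun ⟨d, hd, h⟩ => ⟨d, hd.1, h⟩
  tfae_have 3 → 1 := by
    rintro ⟨d, hd, h⟩
    by_cases hE : G.edgeSet.Nonempty
    · exact Or.inl hE
    · right
      refine ⟨Set.not_nonempty_iff_eq_empty.mp hE, ?_⟩
      by_contra hfin
      simp only [not_or, Set.not_infinite] at hfin
      obtain ⟨⟨a, b⟩, ⟨ha, hb⟩, hm⟩ := Set.exists_max_image (A ×ˢ B) (fun p => d p.1 p.2)
        (hfin.1.prod hfin.2) (hA.prod hB)
      have : G.Adj a b := (h.adj_iff a ha b hb).2 fun x hx y hy => hm (x, y) ⟨hx, hy⟩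
      exact hE ⟨s(a, b), this⟩
  tfae_finish
end

section
/- A bipartite graph G is not isomorphic to any farthest graph if and only if G is finite and empty. -/
open Set

universe u

/-- Corollary 3.3: a bipartite graph `G` (with parts `A`, `B` and vertex set
`A ∪ B = V`) is not isomorphic to any farthest graph iff `G` is finite and empty. -/
theorem stmt13 {V : Type u} (G : SimpleGraph V) (A B : Set V)
    (hA : A.Nonempty) (hB : B.Nonempty) (hAB : Disjoint A B)
    (hcover : A ∪ B = Set.univ)
    (hbip : ∀ u v, G.Adj u v → (u ∈ A ∧ v ∈ B) ∨ (u ∈ B ∧ v ∈ A)) :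
    (¬ ∃ (X : Type u) (d : X → X → ℝ) (H : SimpleGraph X) (A' B' : Set X),
        IsSemimetric d ∧ FarthestFor d H A' B' ∧ A' ∪ B' = Set.univ ∧
          Nonempty (G ≃g H)) ↔
      (Finite V ∧ G.edgeSet = ∅) := by
  classical
  constructor
  · intro h
    by_contra hne
    apply h
    by_cases he : G.edgeSet = ∅
    · have hinf : Infinite V := by
        by_contra hf
        exact hne ⟨not_infinite_iff_finite.mp hf, he⟩
      have hno : ∀ u v, ¬ G.Adj u v := by
        intro u v huv
        have : s(u, v) ∈ G.edgeSet := huv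
        rw [he] at this
        exact this
      obtain ⟨f, hf⟩ : ∃ f : V → ℕ, Function.Surjective f :=
        ⟨Function.invFun (Infinite.natEmbedding V),
          Function.invFun_surjective (Infinite.natEmbedding V).injective⟩
      refine ⟨V, fun x y => if x = y then 0 else 1 + (f x : ℝ) + f y, G, A, B, ⟨?_, ?_, ?_⟩,
        ⟨hA, hB, hAB, hbip, ?_⟩, hcover, ⟨SimpleGraph.Iso.refl⟩⟩
      · intro x y
        split_ifs <;> positivity
      · intro x y
        by_cases hxy : x = y
        · simp [hxy]
        · simp only [hxy, Ne.symm hxy, if_false]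
          ring
      · intro x y
        by_cases hxy : x = y
        · simp [hxy]
        · simp only [hxy, if_false, iff_false]
          positivity
      · intro a ha b hb
        refine iff_of_false (hno a b) ?_
        intro hmax
        have hab : a ≠ b := fun e => Set.disjoint_left.mp hAB ha (e ▸ hb)
        obtain ⟨v, hv⟩ := hf (f a + f b + 1)
        have hv' : (f v : ℝ) = f a + f b + 1 := by exact_mod_cast hv
        have h1 : (0 : ℝ) ≤ f a := by positivity
        have h2 : (0 : ℝ) ≤ f b := by positivity
        have hvm : v ∈ A ∪ B := hcover ▸ Set.mem_univ v
        rcases hvm with hv1 | hv1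
        · have hvb : v ≠ b := fun e => Set.disjoint_left.mp hAB hv1 (e ▸ hb)
          have := hmax v hv1 b hb
          simp only [hab, hvb, if_false] at this
          linarith
        · have hvb : a ≠ v := fun e => Set.disjoint_left.mp hAB ha (e ▸ hv1)
          have := hmax a ha v hv1
          simp only [hab, hvb, if_false] at this
          linarith
    · obtain ⟨p, q, hp, hq, hpq⟩ : ∃ p q, p ∈ A ∧ q ∈ B ∧ G.Adj p q := by
        obtain ⟨e, hE⟩ := Set.nonempty_iff_ne_empty.mpr he
        induction e with
        | _ u v =>
          have huv : G.Adj u v := hE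
          rcases hbip u v huv with h1 | h1
          · exact ⟨u, v, h1.1, h1.2, huv⟩
          · exact ⟨v, u, h1.2, h1.1, huv.symm⟩
      refine ⟨V, fun x y => if x = y then 0 else if G.Adj x y then 2 else 1, G, A, B,
        ⟨?_, ?_, ?_⟩, ⟨hA, hB, hAB, hbip, ?_⟩, hcover, ⟨SimpleGraph.Iso.refl⟩⟩
      · intro x y
        split_ifs <;> norm_num
      · intro x y
        simp only [eq_comm, G.adj_comm x y]
      · intro x y
        split_ifs with h1 h2 <;> simp [h1]
      · intro a ha b hb
        have hab : a ≠ b := fun e => Set.disjoint_left.mp hAB ha (e ▸ hb)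
        constructor
        · intro hadj x _ y _
          simp only [hab, hadj, if_false, if_true]
          split_ifs <;> norm_num
        · intro hmax
          have := hmax p hp q hq
          by_contra hn
          simp only [hpq.ne, hpq, hab, hn, if_false, if_true] at this
          norm_num at this
  · rintro ⟨hfin, he⟩ ⟨X, d, H, A', B', hd, hF, hc, ⟨φ⟩⟩
    have : Finite X := Finite.of_equiv V φ.toEquiv
    obtain ⟨⟨a, b⟩, hab, hmax⟩ := Set.exists_max_image (A' ×ˢ B') (fun p : X × X => d p.1 p.2)
      (Set.toFinite _) (hF.nonemptyA.prod hF.nonemptyB)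
    have hadj : H.Adj a b := (hF.adj_iff a hab.1 b hab.2).mpr
      fun x hx y hy => hmax (x, y) ⟨hx, hy⟩
    have h2 : G.Adj (φ.symm a) (φ.symm b) := φ.symm.map_adj_iff.mpr hadj
    have h3 : s(φ.symm a, φ.symm b) ∈ G.edgeSet := h2
    rw [he] at h3
    exact h3
end

section
/- Every proximinal graph is a farthest graph, but not conversely: there exists a bipartite graph with fixed parts which is farthest but not proximinal (for example, any empty bipartite graph one of whose parts is infinite and the other finite). -/
open Set

universe u

/-- Corollary 3.4: every proximinal graph is a farthest graph, but not conversely: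
there is a bipartite graph with fixed parts (an empty graph with one part infinite
and the other finite) which is farthest but not proximinal. -/
theorem stmt14 :
    (∀ (V : Type u) (G : SimpleGraph V) (A B : Set V) (d : V → V → ℝ),
        IsSemimetric d → ProximinalFor d G A B →
        ∃ d' : V → V → ℝ, IsSemimetric d' ∧ FarthestFor d' G A B) ∧
    (∃ (V : Type u) (G : SimpleGraph V) (A B : Set V),
        A.Nonempty ∧ B.Nonempty ∧ Disjoint A B ∧ A ∪ B = Set.univ ∧
        (∀ u v, G.Adj u v → (u ∈ A ∧ v ∈ B) ∨ (u ∈ B ∧ v ∈ A)) ∧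
        G.edgeSet = ∅ ∧ A.Infinite ∧ B.Finite ∧
        (∃ d : V → V → ℝ, IsSemimetric d ∧ FarthestFor d G A B) ∧
        ¬ ∃ d : V → V → ℝ, IsSemimetric d ∧ ProximinalFor d G A B) := by
  refine ⟨?_, ?_⟩
  · intro V G A B d hd h
    refine ⟨fun x y => (d x y)⁻¹, ⟨fun x y => inv_nonneg.2 (hd.nonneg x y), fun x y => ?_, fun x y => ?_⟩,
      h.nonemptyA, h.nonemptyB, h.disj, h.edges_between, ?_⟩
    · simp only [hd.symm x y]
    · simp only [inv_eq_zero]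
      exact hd.eq_zero_iff x y
    · intro a ha b hb
      have hpos : ∀ x ∈ A, ∀ y ∈ B, 0 < d x y := by
        intro x hx y hy
        refine lt_of_le_of_ne (hd.nonneg x y) fun h0 => ?_
        have hxy : x = y := (hd.eq_zero_iff x y).1 h0.symm
        exact Set.disjoint_left.1 h.disj hx (hxy ▸ hy)
      have hbdd : BddBelow (Set.image2 d A B) := by
        refine ⟨0, ?_⟩
        rintro _ ⟨x, _, y, _, rfl⟩
        exact hd.nonneg x y
      rw [h.adj_iff a ha b hb]
      constructor
      · intro he x hx y hy
        apply inv_anti₀ (hpos a ha b hb)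
        rw [he]
        exact csInf_le hbdd (Set.mem_image2_of_mem hx hy)
      · intro hm
        apply le_antisymm
        · refine le_csInf ⟨_, Set.mem_image2_of_mem ha hb⟩ ?_
          rintro _ ⟨x, hx, y, hy, rfl⟩
          exact (inv_le_inv₀ (hpos x hx y hy) (hpos a ha b hb)).1 (hm x hx y hy)
        · exact csInf_le hbdd (Set.mem_image2_of_mem ha hb)
  · have hinf : ({⟨0⟩}ᶜ : Set (ULift.{u} ℕ)).Infinite := (Set.finite_singleton _).infinite_compl
    refine ⟨ULift.{u} ℕ, ⊥, {⟨0⟩}ᶜ, {⟨0⟩}, hinf.nonempty, Set.singleton_nonempty _,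
      disjoint_compl_left, Set.compl_union_self _, ?_, ?_, hinf, Set.finite_singleton _, ?_, ?_⟩
    · intro u v h
      simp at h
    · simp
    · refine ⟨fun x y => |(x.down : ℝ) - y.down|, ⟨fun x y => abs_nonneg _, fun x y => abs_sub_comm _ _,
        fun x y => ?_⟩, hinf.nonempty, Set.singleton_nonempty _, disjoint_compl_left, ?_, ?_⟩
      · simp only [abs_eq_zero, sub_eq_zero, Nat.cast_inj]
        exact ULift.down_inj
      · intro u v h
        simp at h
      · intro a ha b hb
        rw [Set.mem_singleton_iff] at hb
        subst hb
        simp only [SimpleGraph.bot_adj, false_iff]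
        intro h
        have h1 := h ⟨a.down + 1⟩ (by
          intro h0
          have := congrArg ULift.down (Set.mem_singleton_iff.1 h0)
          simp at this) ⟨0⟩ rfl
        simp only [Nat.cast_zero, sub_zero, Nat.abs_cast, Nat.cast_le] at h1
        omega
    · rintro ⟨d, hd, h⟩
      obtain ⟨a, ha, hda⟩ := h.proxA ⟨0⟩
      have := (h.adj_iff a ha ⟨0⟩ rfl).2 (by
        rw [hd.symm, hda, SetDist, Set.image2_singleton_right]
        congr 1
        exact Set.image_congr fun x _ => hd.symm _ _)
      simp at this
end

section
/- Let G be a graph. Then G is isomorphic to a farthest graph if and only if G is isomorphic to a proximinal graph. -/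
open Set

universe u


open Classical in
/-- two-valued semimetric -/
noncomputable def twoVal {X : Type*} (H : SimpleGraph X) (p q : ℝ) (x y : X) : ℝ :=
  if x = y then 0 else if H.Adj x y then p else q

lemma twoVal_semi {X : Type*} (H : SimpleGraph X) (p q : ℝ) (hp : 0 < p) (hq : 0 < q) :
    IsSemimetric (twoVal H p q) := by
  refine ⟨fun x y => ?_, fun x y => ?_, fun x y => ?_⟩
  · unfold twoVal; split_ifs <;> linarith
  · unfold twoVal; split_ifs <;> simp_all [H.adj_comm x y]
  · unfold twoVal; split_ifs with h h2
    · simp [h]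
    · simp [h, hp.ne']
    · simp [h, hq.ne']

lemma prox_of_mem {X : Type*} {d : X → X → ℝ} {x a : X} {A : Set X}
    (ha : a ∈ A) (h : ∀ b ∈ A, d x a ≤ d x b) : d x a = sInf ((d x) '' A) := by
  have : IsLeast ((d x) '' A) (d x a) := ⟨⟨a, ha, rfl⟩, by rintro _ ⟨b, hb, rfl⟩; exact h b hb⟩
  exact this.csInf_eq.symm

lemma prox_self {X : Type*} {d : X → X → ℝ} (hd : IsSemimetric d) {x : X} {A : Set X}
    (hx : x ∈ A) : ∃ a ∈ A, d x a = sInf ((d x) '' A) :=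
  ⟨x, hx, prox_of_mem hx fun b _ => by
    rw [(hd.eq_zero_iff x x).2 rfl]; exact hd.nonneg _ _⟩

lemma twoVal_prox {X : Type*} (H : SimpleGraph X) (A : Set X) (hA : A.Nonempty) :
    Proximinal (twoVal H 1 2) A := by
  intro x
  by_cases hx : x ∈ A
  · exact prox_self (twoVal_semi H 1 2 (by norm_num) (by norm_num)) hx
  have hne : ∀ b ∈ A, x ≠ b := by rintro b hb rfl; exact hx hb
  by_cases h : ∃ a ∈ A, H.Adj x a
  · obtain ⟨a, ha, hxa⟩ := h
    refine ⟨a, ha, prox_of_mem ha fun b hb => ?_⟩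
    simp only [twoVal, hne a ha, hne b hb, hxa, if_true, if_false]
    split_ifs <;> norm_num
  · push Not at h
    obtain ⟨a, ha⟩ := hA
    refine ⟨a, ha, prox_of_mem ha fun b hb => ?_⟩
    simp [twoVal, hne a ha, hne b hb, h a ha, h b hb]

lemma edge_prox {X : Type*} (H : SimpleGraph X) (A B : Set X) (hA : A.Nonempty)
    (hB : B.Nonempty) (hd : Disjoint A B)
    (he : ∀ u v, H.Adj u v → (u ∈ A ∧ v ∈ B) ∨ (u ∈ B ∧ v ∈ A))
    (hx : ∃ a ∈ A, ∃ b ∈ B, H.Adj a b) : ProximinalFor (twoVal H 1 2) H A B := by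
  refine ⟨hA, hB, hd, twoVal_prox H A hA, twoVal_prox H B hB, he, ?_⟩
  obtain ⟨a, ha, b, hb, hab⟩ := hx
  have hne : ∀ x ∈ A, ∀ y ∈ B, x ≠ y := fun x hx y hy => hd.ne_of_mem hx hy
  have hs : SetDist (twoVal H 1 2) A B = 1 := by
    have : IsLeast (Set.image2 (twoVal H 1 2) A B) 1 := by
      refine ⟨⟨a, ha, b, hb, by simp [twoVal, hne a ha b hb, hab]⟩, ?_⟩
      rintro _ ⟨x, hx, y, hy, rfl⟩
      simp only [twoVal, hne x hx y hy, if_false]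
      split_ifs <;> norm_num
    exact this.csInf_eq
  intro x hx y hy
  rw [hs]
  simp only [twoVal, hne x hx y hy, if_false]
  split_ifs with h <;> simp [h]

lemma edge_far {X : Type*} (H : SimpleGraph X) (A B : Set X) (hA : A.Nonempty)
    (hB : B.Nonempty) (hd : Disjoint A B)
    (he : ∀ u v, H.Adj u v → (u ∈ A ∧ v ∈ B) ∨ (u ∈ B ∧ v ∈ A))
    (hx : ∃ a ∈ A, ∃ b ∈ B, H.Adj a b) : FarthestFor (twoVal H 2 1) H A B := by
  refine ⟨hA, hB, hd, he, ?_⟩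
  obtain ⟨a, ha, b, hb, hab⟩ := hx
  have hne : ∀ x ∈ A, ∀ y ∈ B, x ≠ y := fun x hx y hy => hd.ne_of_mem hx hy
  intro x hx y hy
  constructor
  · intro h u hu v hv
    simp only [twoVal, hne x hx y hy, hne u hu v hv, h, if_true, if_false]
    split_ifs <;> norm_num
  · intro h
    have := h a ha b hb
    by_contra hn
    simp only [twoVal, hne x hx y hy, hne a ha b hb, hab, hn, if_true, if_false] at this
    norm_num at this

lemma exists_surj (X : Type*) [Infinite X] : ∃ f : X → ℕ, Function.Surjective f := by
  exact ⟨Function.invFun (Infinite.natEmbedding X),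
    Function.invFun_surjective (Infinite.natEmbedding X).injective⟩

open Classical in
/-- off-diagonal function made into a semimetric -/
noncomputable def offD {X : Type*} (g : X → X → ℝ) (x y : X) : ℝ := if x = y then 0 else g x y

lemma offD_semi {X : Type*} (g : X → X → ℝ) (hs : ∀ x y, g x y = g y x)
    (hp : ∀ x y, 0 < g x y) : IsSemimetric (offD g) := by
  refine ⟨fun x y => ?_, fun x y => ?_, fun x y => ?_⟩
  · unfold offD; split_ifs
    · exact le_rfl
    · exact (hp x y).le
  · by_cases h : x = y
    · rw [h]
    · simp only [offD, h, Ne.symm h, if_false, hs x y]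
  · unfold offD; split_ifs with h
    · simp [h]
    · simp [h, (hp x y).ne']

lemma inl_inr_disj (X : Type*) :
    Disjoint (Set.range (Sum.inl : X → X ⊕ X)) (Set.range (Sum.inr : X → X ⊕ X)) :=
  Set.isCompl_range_inl_range_inr.disjoint

lemma inf_far (X : Type*) [Infinite X] : ∃ d : X ⊕ X → X ⊕ X → ℝ, IsSemimetric d ∧
    FarthestFor d ⊥ (Set.range Sum.inl) (Set.range Sum.inr) := by
  obtain ⟨f, hf⟩ := exists_surj X
  let r : X ⊕ X → ℝ := Sum.elim (fun x => (f x : ℝ)) (fun x => (f x : ℝ))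
  have hr : ∀ z, 0 ≤ r z := by rintro (z | z) <;> simp [r]
  have : Nonempty X := inferInstance
  refine ⟨offD fun x y => 1 + (r x + r y), offD_semi _ (fun x y => by ring)
    (fun x y => by linarith [hr x, hr y]), Set.range_nonempty _, Set.range_nonempty _,
    inl_inr_disj X, fun u v h => by simp at h, ?_⟩
  rintro _ ⟨a, rfl⟩ _ ⟨b, rfl⟩
  simp only [SimpleGraph.bot_adj, false_iff]
  intro h
  obtain ⟨c, hc⟩ := hf (f a + f b + 1)
  have := h _ ⟨c, rfl⟩ _ ⟨b, rfl⟩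
  simp only [offD, r, reduceCtorEq, if_false, Sum.elim_inl, Sum.elim_inr, hc] at this
  push_cast at this
  have h2 : (0:ℝ) ≤ f b := Nat.cast_nonneg _
  linarith

lemma inf_prox (X : Type*) [Infinite X] : ∃ d : X ⊕ X → X ⊕ X → ℝ, IsSemimetric d ∧
    ProximinalFor d ⊥ (Set.range Sum.inl) (Set.range Sum.inr) := by
  obtain ⟨f, hf⟩ := exists_surj X
  let s : X → ℝ := fun x => 1 / ((f x : ℝ) + 1)
  have hs : ∀ x, 0 < s x := fun x => by positivity
  let r : X ⊕ X → ℝ := Sum.elim s s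
  have hr : ∀ z, 0 < r z := by rintro (z | z) <;> exact hs z
  have : Nonempty X := inferInstance
  have hsemi : IsSemimetric (offD fun x y => 1 + max (r x) (r y)) :=
    offD_semi _ (fun x y => by rw [max_comm]) (fun x y => by
      have := (hr x).trans_le (le_max_left (r x) (r y)); linarith)
  refine ⟨_, hsemi, Set.range_nonempty _, Set.range_nonempty _,
    inl_inr_disj X, ?_, ?_, fun u v h => by simp at h, ?_⟩
  · rintro (x | x)
    · exact prox_self hsemi ⟨x, rfl⟩
    · refine ⟨_, ⟨x, rfl⟩, prox_of_mem ⟨x, rfl⟩ ?_⟩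
      rintro _ ⟨b, rfl⟩
      simp [offD, r]
  · rintro (x | x)
    · refine ⟨_, ⟨x, rfl⟩, prox_of_mem ⟨x, rfl⟩ ?_⟩
      rintro _ ⟨b, rfl⟩
      simp [offD, r]
    · exact prox_self hsemi ⟨x, rfl⟩
  · rintro _ ⟨a, rfl⟩ _ ⟨b, rfl⟩
    simp only [SimpleGraph.bot_adj, false_iff]
    intro h
    obtain ⟨n, hn⟩ := exists_nat_one_div_lt (hs a)
    obtain ⟨c, hc⟩ := hf n
    have hle : SetDist (offD fun x y => 1 + max (r x) (r y)) (Set.range Sum.inl)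
        (Set.range Sum.inr) ≤ offD (fun x y => 1 + max (r x) (r y)) (Sum.inl c) (Sum.inr c) := by
      refine csInf_le ⟨0, ?_⟩ ⟨_, ⟨c, rfl⟩, _, ⟨c, rfl⟩, rfl⟩
      rintro _ ⟨x, _, y, _, rfl⟩
      exact hsemi.nonneg _ _
    rw [← h] at hle
    simp only [offD, r, reduceCtorEq, if_false, Sum.elim_inl, Sum.elim_inr, max_self] at hle
    have h1 := le_max_left (s a) (s b)
    have h2 : s c < s a := by simp only [s, hc] at hn ⊢; exact hn
    linarith

lemma far_edge {X : Type*} [Finite X] {d : X → X → ℝ} {H : SimpleGraph X} {A B : Set X}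
    (h : FarthestFor d H A B) : ∃ a ∈ A, ∃ b ∈ B, H.Adj a b := by
  obtain ⟨p, hp, hm⟩ := Set.exists_max_image (A ×ˢ B) (fun p => d p.1 p.2) (Set.toFinite _)
    (h.nonemptyA.prod h.nonemptyB)
  exact ⟨p.1, hp.1, p.2, hp.2, (h.adj_iff _ hp.1 _ hp.2).2 fun x hx y hy => hm (x, y) ⟨hx, hy⟩⟩

lemma prox_edge {X : Type*} [Finite X] {d : X → X → ℝ} {H : SimpleGraph X} {A B : Set X}
    (h : ProximinalFor d H A B) : ∃ a ∈ A, ∃ b ∈ B, H.Adj a b := by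
  obtain ⟨p, hp, hm⟩ := Set.exists_min_image (A ×ˢ B) (fun p => d p.1 p.2) (Set.toFinite _)
    (h.nonemptyA.prod h.nonemptyB)
  refine ⟨p.1, hp.1, p.2, hp.2, (h.adj_iff _ hp.1 _ hp.2).2 ?_⟩
  have : IsLeast (Set.image2 d A B) (d p.1 p.2) :=
    ⟨⟨_, hp.1, _, hp.2, rfl⟩, by rintro _ ⟨x, hx, y, hy, rfl⟩; exact hm (x, y) ⟨hx, hy⟩⟩
  exact this.csInf_eq.symm

lemma sum_iso {X : Type*} [Infinite X] {A B : Set X} {H : SimpleGraph X}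
    (he : ∀ u v, H.Adj u v → (u ∈ A ∧ v ∈ B) ∨ (u ∈ B ∧ v ∈ A))
    (hx : ¬ ∃ a ∈ A, ∃ b ∈ B, H.Adj a b) :
    Nonempty (H ≃g (⊥ : SimpleGraph (X ⊕ X))) := by
  have hc : Cardinal.mk X = Cardinal.mk (X ⊕ X) := by
    rw [Cardinal.mk_sum, Cardinal.lift_id, Cardinal.add_eq_self (Cardinal.aleph0_le_mk X)]
  obtain ⟨e⟩ := Cardinal.eq.1 hc
  refine ⟨⟨e, ?_⟩⟩
  intro u v
  simp only [SimpleGraph.bot_adj, false_iff]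
  intro h
  rcases he u v h with h' | h'
  · exact hx ⟨u, h'.1, v, h'.2, h⟩
  · exact hx ⟨v, h'.2, u, h'.1, h.symm⟩

/-- Proposition 3.4: a graph `G` is isomorphic to a farthest graph iff `G` is
isomorphic to a proximinal graph. -/
theorem stmt15 {V : Type u} (G : SimpleGraph V) :
    (∃ (X : Type u) (d : X → X → ℝ) (H : SimpleGraph X) (A B : Set X),
        IsSemimetric d ∧ FarthestFor d H A B ∧ A ∪ B = Set.univ ∧
          Nonempty (G ≃g H)) ↔
    (∃ (X : Type u) (d : X → X → ℝ) (H : SimpleGraph X) (A B : Set X),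
        IsSemimetric d ∧ ProximinalFor d H A B ∧ A ∪ B = Set.univ ∧
          Nonempty (G ≃g H)) := by
  constructor
  · rintro ⟨X, d, H, A, B, hd, h, hU, ⟨i⟩⟩
    by_cases hx : ∃ a ∈ A, ∃ b ∈ B, H.Adj a b
    · exact ⟨X, _, H, A, B, twoVal_semi H 1 2 (by norm_num) (by norm_num),
        edge_prox H A B h.nonemptyA h.nonemptyB h.disj h.edges_between hx, hU, ⟨i⟩⟩
    · have : Infinite X := by
        by_contra hn
        have := not_infinite_iff_finite.1 hn
        exact hx (far_edge h)
      obtain ⟨d', h1, h2⟩ := inf_prox X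
      obtain ⟨j⟩ := sum_iso h.edges_between hx
      exact ⟨X ⊕ X, d', ⊥, _, _, h1, h2, Set.range_inl_union_range_inr, ⟨i.trans j⟩⟩
  · rintro ⟨X, d, H, A, B, hd, h, hU, ⟨i⟩⟩
    by_cases hx : ∃ a ∈ A, ∃ b ∈ B, H.Adj a b
    · exact ⟨X, _, H, A, B, twoVal_semi H 2 1 (by norm_num) (by norm_num),
        edge_far H A B h.nonemptyA h.nonemptyB h.disj h.edges_between hx, hU, ⟨i⟩⟩
    · have : Infinite X := by
        by_contra hn
        have := not_infinite_iff_finite.1 hn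
        exact hx (prox_edge h)
      obtain ⟨d', h1, h2⟩ := inf_far X
      obtain ⟨j⟩ := sum_iso h.edges_between hx
      exact ⟨X ⊕ X, d', ⊥, _, _, h1, h2, Set.range_inl_union_range_inr, ⟨i.trans j⟩⟩
end

section
/- There exist an ultrametric space (X,d) and disjoint infinite proximinal subsets A and B of X such that d(a,b) > dist(A,B) for all a ∈ A and b ∈ B; in particular, a pair of proximinal sets in an ultrametric space need not admit a best proximity pair. Concretely, if X = A ∪ B for disjoint infinite sets A, B and Φ : X → ℕ₊ is a surjection with Φ(A) the even positive integers and Φ(B) the odd positive integers, then the function d₁ defined by d₁(x,x) = 0, d₁(x,y) = 1 if x ≠ y and Φ(x) = Φ(y), and d₁(x,y) = max{1 + 1/Φ(x), 1 + 1/Φ(y)} if Φ(x) ≠ Φ(y), is an ultrametric on X, the sets A and B are proximinal in (X,d₁), dist(A,B) = 1, and d₁(a,b) > 1 for all a ∈ A and b ∈ B. -/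
open Set

universe u

lemma aux_isLeast_prox {X : Type u} (d : X → X → ℝ) (C : Set X) (x c : X) (hc : c ∈ C)
    (h : ∀ y ∈ C, d x c ≤ d x y) : d x c = sInf ((d x) '' C) := by
  have : IsLeast ((d x) '' C) (d x c) := by
    refine ⟨⟨c, hc, rfl⟩, ?_⟩
    rintro _ ⟨y, hy, rfl⟩
    exact h y hy
  exact this.csInf_eq.symm

lemma aux_main (X : Type u) (A B : Set X) (hU : A ∪ B = Set.univ)
      (Φ : X → ℕ) (hA : Φ '' A = {n : ℕ | 0 < n ∧ Even n}) (hB : Φ '' B = {n : ℕ | Odd n})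
      (d₁ : X → X → ℝ)
        (h0 : ∀ x, d₁ x x = 0)
        (h1 : ∀ x y, x ≠ y → Φ x = Φ y → d₁ x y = 1)
        (h2 : ∀ x y, Φ x ≠ Φ y →
          d₁ x y = max (1 + 1 / (Φ x : ℝ)) (1 + 1 / (Φ y : ℝ))) :
        IsUltrametric d₁ ∧ Proximinal d₁ A ∧ Proximinal d₁ B ∧
          SetDist d₁ A B = 1 ∧ ∀ a ∈ A, ∀ b ∈ B, 1 < d₁ a b := by
  have hAe : ∀ a ∈ A, 0 < Φ a ∧ Even (Φ a) := fun a ha => by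
    have : Φ a ∈ Φ '' A := ⟨a, ha, rfl⟩
    rw [hA] at this; exact this
  have hBo : ∀ b ∈ B, Odd (Φ b) := fun a ha => by
    have : Φ a ∈ Φ '' B := ⟨a, ha, rfl⟩
    rw [hB] at this; exact this
  have hm : ∀ x, x ∈ A ∨ x ∈ B := fun x => by
    have : x ∈ A ∪ B := by rw [hU]; trivial
    exact this
  have hpos : ∀ x, 0 < Φ x := fun x => by
    rcases hm x with h | h
    · exact (hAe x h).1
    · exact (hBo x h).pos
  have hp : ∀ x, 0 < 1 / (Φ x : ℝ) := fun x => by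
    have : (0:ℝ) < Φ x := by exact_mod_cast hpos x
    positivity
  have hne : ∀ a ∈ A, ∀ b ∈ B, Φ a ≠ Φ b := fun a ha b hb h => by
    have h3 := (hAe a ha).2
    have h4 := hBo b hb
    rw [← h] at h4
    exact (Nat.not_odd_iff_even.2 h3) h4
  have hge : ∀ x y, x ≠ y → 1 ≤ d₁ x y := fun x y h => by
    by_cases hh : Φ x = Φ y
    · rw [h1 x y h hh]
    · rw [h2 x y hh]
      exact le_max_of_le_left (by linarith [hp x])
  have hnn : ∀ x y, 0 ≤ d₁ x y := fun x y => by
    by_cases h : x = y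
    · rw [h, h0]
    · linarith [hge x y h]
  have hsemi : IsSemimetric d₁ := by
    refine ⟨hnn, ?_, ?_⟩
    · intro x y
      by_cases h : x = y
      · rw [h]
      · by_cases hh : Φ x = Φ y
        · rw [h1 x y h hh, h1 y x (Ne.symm h) hh.symm]
        · rw [h2 x y hh, h2 y x (Ne.symm hh), max_comm]
    · intro x y
      constructor
      · intro h
        by_contra hxy
        linarith [hge x y hxy]
      · rintro rfl
        exact h0 x
  have hlt : ∀ a ∈ A, ∀ b ∈ B, 1 < d₁ a b := fun a ha b hb => by
    rw [h2 a b (hne a ha b hb)]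
    exact lt_max_of_lt_left (by linarith [hp a])
  have key : ∀ (C : Set X) (x c : X), c ∈ C → (∀ y ∈ C, Φ x ≠ Φ y) → Φ x ≤ Φ c →
      d₁ x c = sInf ((d₁ x) '' C) := by
    intro C x c hc hC hle
    apply aux_isLeast_prox d₁ C x c hc
    intro y hy
    rw [h2 x c (hC c hc), h2 x y (hC y hy)]
    refine max_le (le_max_left _ _) (le_max_of_le_left ?_)
    have : (0:ℝ) < Φ x := by exact_mod_cast hpos x
    gcongr
  have hself : ∀ (C : Set X) (x : X), x ∈ C → d₁ x x = sInf ((d₁ x) '' C) := by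
    intro C x hx
    apply aux_isLeast_prox d₁ C x x hx
    intro y _
    rw [h0]; exact hnn x y
  have exA : ∀ n : ℕ, 0 < n → ∃ a ∈ A, Φ a = 2 * n := fun n hn => by
    have : 2 * n ∈ Φ '' A := by
      rw [hA]; exact ⟨by omega, even_two_mul n⟩
    exact this
  have exB : ∀ n : ℕ, ∃ b ∈ B, Φ b = 2 * n + 1 := fun n => by
    have : 2 * n + 1 ∈ Φ '' B := by
      rw [hB]; exact odd_two_mul_add_one n
    exact this
  refine ⟨⟨hsemi, ?_⟩, ?_, ?_, ?_, hlt⟩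
  · intro x y z
    by_cases hxz : x = z
    · subst hxz
      exact le_max_right _ _
    by_cases hzy : z = y
    · subst hzy
      exact le_max_left _ _
    by_cases hxy : x = y
    · subst hxy
      rw [h0]; exact le_max_of_le_left (hnn _ _)
    by_cases h : Φ x = Φ y
    · rw [h1 x y hxy h]
      exact le_max_of_le_left (hge _ _ hxz)
    by_cases h3 : Φ x = Φ z
    · rw [h2 x y h, h2 z y (h3 ▸ h), h3]
      exact le_max_right _ _
    by_cases h4 : Φ z = Φ y
    · rw [h2 x y h, h2 x z h3, h4]
      exact le_max_left _ _
    rw [h2 x y h, h2 x z h3, h2 z y h4]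
    exact max_le_max (le_max_left _ _) (le_max_right _ _)
  · intro x
    rcases hm x with h | h
    · exact ⟨x, h, hself A x h⟩
    · obtain ⟨a, ha, hh⟩ := exA (Φ x) (hpos x)
      exact ⟨a, ha, key A x a ha (fun y hy => (hne y hy x h).symm) (by omega)⟩
  · intro x
    rcases hm x with h | h
    · obtain ⟨b, hb, hh⟩ := exB (Φ x)
      exact ⟨b, hb, key B x b hb (fun y hy => hne x h y hy) (by omega)⟩
    · exact ⟨x, h, hself B x h⟩
  · have hglb : IsGLB (Set.image2 d₁ A B) 1 := by
      constructor
      · rintro _ ⟨a, ha, b, hb, rfl⟩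
        exact (hlt a ha b hb).le
      · intro m hmm
        apply le_of_forall_pos_le_add
        intro ε hε
        obtain ⟨n, hn⟩ := exists_nat_one_div_lt hε
        obtain ⟨a, ha, hh⟩ := exA (n + 1) (by omega)
        obtain ⟨b, hb, hh'⟩ := exB (n + 1)
        have h5 : m ≤ d₁ a b := hmm ⟨a, ha, b, hb, rfl⟩
        rw [h2 a b (hne a ha b hb)] at h5
        refine h5.trans ?_
        have e : ∀ k : ℕ, n + 1 ≤ k → 1 + 1 / (k : ℝ) ≤ 1 + ε := fun k hk => by
          have h6 : ((n : ℝ) + 1) ≤ k := by exact_mod_cast hk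
          have h7 : 1 / (k : ℝ) ≤ 1 / ((n : ℝ) + 1) :=
            one_div_le_one_div_of_le (by positivity) h6
          linarith
        exact max_le (e _ (by omega)) (e _ (by omega))
    exact hglb.csInf_eq (by
      obtain ⟨a, ha, _⟩ := exA 1 one_pos
      obtain ⟨b, hb, _⟩ := exB 1
      exact ⟨_, a, ha, b, hb, rfl⟩)

/-- There exist an ultrametric space with disjoint infinite proximinal subsets `A`,
`B` such that `d a b > dist(A,B)` for all `a ∈ A`, `b ∈ B` (so no best proximity
pair exists); concretely, the function `d₁` built from a surjection `Φ` of
`X = A ∪ B` onto the positive integers sending `A` onto the positive even numbers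
and `B` onto the odd numbers is such an ultrametric, with `dist(A,B) = 1` and
`d₁ a b > 1` for all `a ∈ A`, `b ∈ B`. -/
theorem stmt16 :
    (∃ (X : Type u) (d : X → X → ℝ) (A B : Set X),
        IsUltrametric d ∧ Disjoint A B ∧ A.Infinite ∧ B.Infinite ∧
        Proximinal d A ∧ Proximinal d B ∧
        ∀ a ∈ A, ∀ b ∈ B, SetDist d A B < d a b) ∧
    (∀ (X : Type u) (A B : Set X), Disjoint A B → A ∪ B = Set.univ →
        A.Infinite → B.Infinite →
      ∀ Φ : X → ℕ, Φ '' A = {n : ℕ | 0 < n ∧ Even n} → Φ '' B = {n : ℕ | Odd n} →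
      ∀ d₁ : X → X → ℝ,
        (∀ x, d₁ x x = 0) →
        (∀ x y, x ≠ y → Φ x = Φ y → d₁ x y = 1) →
        (∀ x y, Φ x ≠ Φ y →
          d₁ x y = max (1 + 1 / (Φ x : ℝ)) (1 + 1 / (Φ y : ℝ))) →
        IsUltrametric d₁ ∧ Proximinal d₁ A ∧ Proximinal d₁ B ∧
          SetDist d₁ A B = 1 ∧ ∀ a ∈ A, ∀ b ∈ B, 1 < d₁ a b) := by
  refine ⟨?_, fun X A B _ hU _ _ Φ hA hB d₁ h0 h1 h2 =>
    aux_main X A B hU Φ hA hB d₁ h0 h1 h2⟩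
  classical
  let Φ : ULift.{u} ℕ → ℕ := fun x => x.down + 1
  let A : Set (ULift.{u} ℕ) := {x | Even (Φ x)}
  let B : Set (ULift.{u} ℕ) := {x | Odd (Φ x)}
  let d : ULift.{u} ℕ → ULift.{u} ℕ → ℝ := fun x y =>
    if x = y then 0 else max (1 + 1 / (Φ x : ℝ)) (1 + 1 / (Φ y : ℝ))
  have hinj : ∀ x y, Φ x = Φ y → x = y := fun x y h => by
    apply ULift.ext
    exact Nat.succ_injective h
  have hA : Φ '' A = {n : ℕ | 0 < n ∧ Even n} := by
    ext n
    constructor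
    · rintro ⟨x, hx, rfl⟩
      exact ⟨Nat.succ_pos _, hx⟩
    · rintro ⟨hn, he⟩
      have e : Φ ⟨n - 1⟩ = n := by change n - 1 + 1 = n; omega
      exact ⟨⟨n - 1⟩, by change Even (Φ _); rwa [e], e⟩
  have hB : Φ '' B = {n : ℕ | Odd n} := by
    ext n
    constructor
    · rintro ⟨x, hx, rfl⟩
      exact hx
    · intro he
      have hn : 0 < n := Odd.pos he
      have e : Φ ⟨n - 1⟩ = n := by change n - 1 + 1 = n; omega
      exact ⟨⟨n - 1⟩, by change Odd (Φ _); rwa [e], e⟩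
  have hU : A ∪ B = Set.univ := by
    ext x
    exact ⟨fun _ => trivial, fun _ => Nat.even_or_odd (Φ x)⟩
  obtain ⟨p1, p2, p3, p4, p5⟩ := aux_main _ A B hU Φ hA hB d (fun x => if_pos rfl)
    (fun x y h h' => absurd (hinj x y h') h)
    (fun x y h => if_neg (fun h' => h (congrArg Φ h')))
  refine ⟨_, d, A, B, p1, ?_, ?_, ?_, p2, p3, ?_⟩
  · rw [Set.disjoint_left]
    intro x hx hx'
    exact (Nat.not_odd_iff_even.2 hx) hx'
  · apply Set.Infinite.of_image Φ
    rw [hA]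
    refine Set.infinite_of_forall_exists_gt fun n => ⟨2 * (n + 1), ⟨by omega, even_two_mul _⟩, by omega⟩
  · apply Set.Infinite.of_image Φ
    rw [hB]
    refine Set.infinite_of_forall_exists_gt fun n => ⟨2 * n + 1, odd_two_mul_add_one n, by omega⟩
  · rw [p4]; exact p5
end

section
/- Let G = G_{X,d}(A,B) be a proximinal graph for a semimetric space (X,d) with parts A and B. Define ρ : X × X → [0,∞) by ρ(x,y) = 0 if x = y and ρ(x,y) = 1/d(x,y) if x ≠ y. Then ρ is a semimetric on X, and G is a farthest graph for the semimetric space (X,ρ) with parts A and B. -/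
open Set

/-- Example 3.5 (first part): if `G = G_{X,d}(A,B)` is a proximinal graph for a
semimetric space `(X,d)` and `ρ x y = 1 / d x y` for `x ≠ y` (with `ρ x x = 0`),
then `ρ` is a semimetric on `X` and `G` is a farthest graph for `(X,ρ)` with parts
`A` and `B`. -/
theorem stmt17 {X : Type*} (d : X → X → ℝ) (hd : IsSemimetric d)
    (G : SimpleGraph X) (A B : Set X) (hG : ProximinalFor d G A B)
    (ρ : X → X → ℝ) (hρ₀ : ∀ x, ρ x x = 0)
    (hρ₁ : ∀ x y, x ≠ y → ρ x y = 1 / d x y) :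
    IsSemimetric ρ ∧ FarthestFor ρ G A B := by
  have hpos : ∀ x y, x ≠ y → 0 < d x y := fun x y h =>
    lt_of_le_of_ne (hd.nonneg x y) (fun h0 => h ((hd.eq_zero_iff x y).1 h0.symm))
  have hne : ∀ x ∈ A, ∀ y ∈ B, x ≠ y := fun x hx y hy h =>
    Set.disjoint_left.1 hG.disj hx (h ▸ hy)
  refine ⟨⟨?_, ?_, ?_⟩, ⟨hG.nonemptyA, hG.nonemptyB, hG.disj, hG.edges_between, ?_⟩⟩
  · intro x y
    by_cases h : x = y
    · subst h
      exact (hρ₀ x).ge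
    · rw [hρ₁ x y h]
      exact (one_div_pos.2 (hpos x y h)).le
  · intro x y
    by_cases h : x = y
    · subst h
      rfl
    · rw [hρ₁ x y h, hρ₁ y x (Ne.symm h), hd.symm x y]
  · intro x y
    by_cases h : x = y
    · subst h
      simp [hρ₀]
    · rw [hρ₁ x y h]
      exact ⟨fun h0 => absurd h0 (one_div_pos.2 (hpos x y h)).ne', fun h0 => absurd h0 h⟩
  · intro a ha b hb
    have hbdd : BddBelow (Set.image2 d A B) := by
      refine ⟨0, ?_⟩
      rintro _ ⟨x, _, y, _, rfl⟩
      exact hd.nonneg x y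
    have key : d a b = SetDist d A B ↔ ∀ x ∈ A, ∀ y ∈ B, d a b ≤ d x y := by
      constructor
      · intro h x hx y hy
        rw [h]
        exact csInf_le hbdd (Set.mem_image2_of_mem hx hy)
      · intro h
        apply le_antisymm
        · apply le_csInf ⟨_, Set.mem_image2_of_mem ha hb⟩
          rintro _ ⟨x, hx, y, hy, rfl⟩
          exact h x hx y hy
        · exact csInf_le hbdd (Set.mem_image2_of_mem ha hb)
    rw [hG.adj_iff a ha b hb, key]
    refine forall₄_congr fun x hx y hy => ?_
    rw [hρ₁ x y (hne x hx y hy), hρ₁ a b (hne a ha b hb)]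
    exact (one_div_le_one_div (hpos x y (hne x hx y hy)) (hpos a b (hne a ha b hb))).symm
end
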